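/- arXiv:1607.01215 — 3 statements merged into one kernel-verified Lean document; each statement's English description precedes it below -/
import Mathlib

section
/- The volume of the set of real qubit channels 𝒬_ℝ (identified with a convex subset of ℝ⁷ via the parametrization of the Choi matrix with entries a,b,c,d,e,f,g ∈ ℝ, a,f ∈ [0,1], subject to positive semidefiniteness) with respect to the 7-dimensional Lebesgue measure (with the volume element 2⁴ dλ₇ coming from the Euclidean structure on self-adjoint matrices) equals 4π³/105. -/
open MeasureTheory Real

/-- The Choi matrix of a real qubit channel with parameters `(a,b,c,d,e,f,g) ∈ ℝ⁷`. -/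
noncomputable def choiR (v : Fin 7 → ℝ) : Matrix (Fin 4) (Fin 4) ℝ :=
  !![v 0, v 1, v 2, v 3;
     v 1, 1 - v 0, v 4, -(v 2);
     v 2, v 4, v 5, v 6;
     v 3, -(v 2), v 6, 1 - v 5]

lemma quad2 (α β γ : ℝ) : (∀ x y : ℝ, 0 ≤ α * x ^ 2 + 2 * β * x * y + γ * y ^ 2) ↔
    (0 ≤ α + γ ∧ β ^ 2 ≤ α * γ) := by
  constructor
  · intro h
    have h1 := h 1 0
    have h2 := h 0 1
    have hα : 0 ≤ α := by nlinarith
    have hγ : 0 ≤ γ := by nlinarith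
    refine ⟨by linarith, ?_⟩
    have h3 := h β (-α)
    have h4 := h γ (-β)
    have h5 := h 1 (-β)
    by_cases ha : α = 0
    · by_cases hg : γ = 0
      · have h6 := h 1 1
        have h7 := h 1 (-1)
        subst ha; subst hg
        have : β = 0 := by linarith
        simp [this]
      · have : 0 < γ := lt_of_le_of_ne hγ (Ne.symm hg)
        by_contra hc
        push Not at hc
        nlinarith
    · have : 0 < α := lt_of_le_of_ne hα (Ne.symm ha)
      by_contra hc
      push Not at hc
      nlinarith
  · rintro ⟨h1, h2⟩ x y
    have hα : 0 ≤ α := by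
      by_contra hc
      push Not at hc
      nlinarith [sq_nonneg β]
    have hγ : 0 ≤ γ := by
      by_contra hc
      push Not at hc
      nlinarith [sq_nonneg β]
    rcases eq_or_lt_of_le hα with ha | ha
    · subst ha
      have : β = 0 := by nlinarith
      subst this
      nlinarith [mul_nonneg hγ (sq_nonneg y)]
    · have h3 : 0 ≤ α * (α * x ^ 2 + 2 * β * x * y + γ * y ^ 2) := by
        nlinarith [sq_nonneg (α * x + β * y), mul_nonneg (sub_nonneg.2 h2) (sq_nonneg y)]
      exact nonneg_of_mul_nonneg_right h3 ha

lemma psd_choi (v : Fin 7 → ℝ) : (choiR v).PosSemidef ↔ ∀ x : Fin 4 → ℝ,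
    0 ≤ v 0 * x 0 ^ 2 + (1 - v 0) * x 1 ^ 2 + v 5 * x 2 ^ 2 + (1 - v 5) * x 3 ^ 2
      + 2 * (v 1 * x 0 * x 1 + v 2 * x 0 * x 2 + v 3 * x 0 * x 3 + v 4 * x 1 * x 2
      - v 2 * x 1 * x 3 + v 6 * x 2 * x 3) := by
  rw [Matrix.posSemidef_iff_dotProduct_mulVec]
  have hH : (choiR v).IsHermitian := by
    ext i j
    fin_cases i <;> fin_cases j <;> simp [choiR]
  simp only [hH, true_and]
  refine forall_congr' fun x => ?_
  have : star x ⬝ᵥ (choiR v).mulVec x = v 0 * x 0 ^ 2 + (1 - v 0) * x 1 ^ 2 + v 5 * x 2 ^ 2 + (1 - v 5) * x 3 ^ 2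
      + 2 * (v 1 * x 0 * x 1 + v 2 * x 0 * x 2 + v 3 * x 0 * x 3 + v 4 * x 1 * x 2
      - v 2 * x 1 * x 3 + v 6 * x 2 * x 3) := by
    simp [dotProduct, Matrix.mulVec, Fin.sum_univ_four, choiR]
    ring
  rw [this]

lemma measurableSet_psd : MeasurableSet {v : Fin 7 → ℝ | (choiR v).PosSemidef} := by
  apply IsClosed.measurableSet
  simp only [psd_choi, Set.ofPred_forall]
  exact isClosed_iInter fun x => isClosed_le (by fun_prop) (by fun_prop)

/-- the parameter vector built from `A = (a,c,f)` and `B = (b,d,e,g)` -/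
def join (u : Fin 3 → ℝ) (w : Fin 4 → ℝ) : Fin 7 → ℝ :=
  ![u 0, w 0, u 1, w 1, w 2, u 2, w 3]

/-- contractions -/
def Ctr : Set (Fin 4 → ℝ) := {w | ∀ x : Fin 4 → ℝ,
    0 ≤ x 0 ^ 2 + x 1 ^ 2 + x 2 ^ 2 + x 3 ^ 2
      + 2 * (w 0 * x 0 * x 1 + w 1 * x 0 * x 3 + w 2 * x 1 * x 2 + w 3 * x 2 * x 3)}

lemma measurableSet_ctr : MeasurableSet Ctr := by
  apply IsClosed.measurableSet
  simp only [Ctr, Set.ofPred_forall]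
  exact isClosed_iInter fun x => isClosed_le (by fun_prop) (by fun_prop)

lemma ctr_iff (w : Fin 4 → ℝ) : w ∈ Ctr ↔ 
    0 ≤ (1 - w 0 ^ 2 - w 2 ^ 2) + (1 - w 1 ^ 2 - w 3 ^ 2) ∧
    (-(w 0 * w 1 + w 2 * w 3)) ^ 2 ≤ (1 - w 0 ^ 2 - w 2 ^ 2) * (1 - w 1 ^ 2 - w 3 ^ 2) := by
  rw [← quad2]
  constructor
  · intro h x y
    have := h ![-(w 0 * x + w 1 * y), x, -(w 2 * x + w 3 * y), y]
    simp at this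
    linarith
  · intro h x
    have := h (x 1) (x 3)
    nlinarith [sq_nonneg (x 0 + (w 0 * x 1 + w 1 * x 3)), sq_nonneg (x 2 + (w 2 * x 1 + w 3 * x 3))]

lemma chol (α β γ : ℝ) (h1 : 0 < α) (h2 : β ^ 2 < α * γ) :
    ∃ p q r : ℝ, 0 < p ∧ 0 < r ∧ α = p ^ 2 ∧ β = p * q ∧ γ = q ^ 2 + r ^ 2 := by
  have hp : 0 < √α := Real.sqrt_pos.2 h1
  have hs : √α ^ 2 = α := Real.sq_sqrt h1.le
  have h3 : 0 < γ - β ^ 2 / α := by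
    rw [sub_pos, div_lt_iff₀ h1]; linarith
  refine ⟨√α, β / √α, √(γ - β ^ 2 / α), hp, Real.sqrt_pos.2 h3, hs.symm, by field_simp, ?_⟩
  rw [Real.sq_sqrt h3.le, div_pow, hs]; ring

/-- the linear map `X ↦ L X Mᵀ` -/
def kmat (p q r p' q' r' : ℝ) : Matrix (Fin 4) (Fin 4) ℝ :=
  !![p * p', 0, 0, 0;
     p * q', p * r', 0, 0;
     q * p', 0, r * p', 0;
     q * q', q * r', r * q', r * r']

lemma kmat_det (p q r p' q' r' : ℝ) : (kmat p q r p' q' r').det = (p * r) ^ 2 * (p' * r') ^ 2 := by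
  rw [Matrix.det_of_isLowerTriangular]
  · simp [kmat, Fin.prod_univ_four]; ring
  · intro i j hij
    fin_cases i <;> fin_cases j <;> first | rfl | exact absurd hij (by decide)

lemma fiber_pre (p q r p' q' r' : ℝ) (hp : 0 < p) (hr : 0 < r) (hp' : 0 < p') (hr' : 0 < r')
    (u : Fin 3 → ℝ) (h0 : u 0 = p ^ 2) (h1 : u 1 = p * q) (h2 : u 2 = q ^ 2 + r ^ 2)
    (k0 : 1 - u 0 = p' ^ 2) (k1 : - u 1 = p' * q') (k2 : 1 - u 2 = q' ^ 2 + r' ^ 2) :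
    Matrix.toLin' (kmat p q r p' q' r') ⁻¹' {w | (choiR (join u w)).PosSemidef} = Ctr := by
  ext w
  simp only [Set.mem_preimage, Set.mem_ofPred_eq, psd_choi]
  simp only [join, Matrix.toLin'_apply, kmat, Matrix.mulVec, dotProduct, Fin.sum_univ_four]
  simp only [Ctr, Set.mem_ofPred_eq]
  simp
  have e1 : u 2 = q ^ 2 + r ^ 2 := h2
  rw [k0, k2, h0, h1, h2]
  have key : p * q = - (p' * q') := by linarith
  constructor
  · intro h x
    -- solve Pᵀ y = x
    have := h ![(x 0 - q * (x 2 / r)) / p, (x 1 - q' * (x 3 / r')) / p', x 2 / r, x 3 / r']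
    simp at this
    convert this using 1
    have e0 : x 0 = p * ((x 0 - q * (x 2 / r)) / p) + q * (x 2 / r) := by field_simp; ring
    have e1 : x 1 = p' * ((x 1 - q' * (x 3 / r')) / p') + q' * (x 3 / r') := by field_simp; ring
    have e2 : x 2 = r * (x 2 / r) := by field_simp
    have e3 : x 3 = r' * (x 3 / r') := by field_simp
    generalize (x 0 - q * (x 2 / r)) / p = y0 at *
    generalize (x 1 - q' * (x 3 / r')) / p' = y1 at *
    generalize x 2 / r = y2 at *
    generalize x 3 / r' = y3 at *
    rw [e0, e1, e2, e3]
    linear_combination (2 * y1 * y3) * key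
  · intro h x
    have := h ![p * x 0 + q * x 2, p' * x 1 + q' * x 3, r * x 2, r' * x 3]
    simp at this
    convert this using 1
    linear_combination (-2 * x 1 * x 3) * key

lemma fiber_vol (u : Fin 3 → ℝ) (h0 : 0 < u 0) (h1 : u 1 ^ 2 < u 0 * u 2)
    (k0 : 0 < 1 - u 0) (k1 : u 1 ^ 2 < (1 - u 0) * (1 - u 2)) :
    volume {w | (choiR (join u w)).PosSemidef} =
      ENNReal.ofReal ((u 0 * u 2 - u 1 ^ 2) * ((1 - u 0) * (1 - u 2) - u 1 ^ 2)) * volume Ctr := by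
  obtain ⟨p, q, r, hp, hr, e0, e1, e2⟩ := chol _ _ _ h0 h1
  obtain ⟨p', q', r', hp', hr', e0', e1', e2'⟩ := chol _ (-u 1) _ k0 (by simpa using k1)
  have hd : LinearMap.det (Matrix.toLin' (kmat p q r p' q' r')) = (p * r) ^ 2 * (p' * r') ^ 2 := by
    rw [LinearMap.det_toLin', kmat_det]
  have hd0 : 0 < (p * r) ^ 2 * (p' * r') ^ 2 := by positivity
  have := Measure.addHaar_preimage_linearMap (volume : Measure (Fin 4 → ℝ))
    (f := Matrix.toLin' (kmat p q r p' q' r')) (by rw [hd]; exact hd0.ne')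
    {w | (choiR (join u w)).PosSemidef}
  rw [fiber_pre p q r p' q' r' hp hr hp' hr' u e0 e1 e2 e0' e1' e2', hd] at this
  rw [this, ← mul_assoc, ← ENNReal.ofReal_mul']
  · have e : (u 0 * u 2 - u 1 ^ 2) * ((1 - u 0) * (1 - u 2) - u 1 ^ 2) = (p * r) ^ 2 * (p' * r') ^ 2 := by
      have : u 0 * u 2 - u 1 ^ 2 = (p * r) ^ 2 := by rw [e0, e1, e2]; ring
      rw [this]
      have : (1 - u 0) * (1 - u 2) - u 1 ^ 2 = (p' * r') ^ 2 := by
        rw [← neg_sq (u 1), e0', e1', e2']; ring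
      rw [this]
    rw [e, abs_of_pos (inv_pos.2 hd0), mul_inv_cancel₀ hd0.ne']; simp
  · positivity

lemma fiber_empty (u : Fin 3 → ℝ) (w : Fin 4 → ℝ) (h : (choiR (join u w)).PosSemidef) :
    (0 ≤ u 0 + u 2 ∧ u 1 ^ 2 ≤ u 0 * u 2) ∧
    (0 ≤ (1 - u 0) + (1 - u 2) ∧ (- u 1) ^ 2 ≤ (1 - u 0) * (1 - u 2)) := by
  rw [psd_choi] at h
  rw [← quad2, ← quad2]
  constructor
  · intro x y
    have := h ![x, 0, y, 0]
    simp [join] at this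
    linarith
  · intro x y
    have := h ![0, x, 0, y]
    simp [join] at this
    linarith
open scoped ENNReal

lemma lint_sum {ι κ τ : Type*} [Fintype ι] [Fintype κ] [Fintype τ] (e : ι ⊕ κ ≃ τ)
    (f : (τ → ℝ) → ℝ≥0∞) (hf : Measurable f) :
    ∫⁻ v, f v = ∫⁻ x : ι → ℝ, ∫⁻ y : κ → ℝ, f (fun i => Sum.elim x y (e.symm i)) := by
  have e1 := volume_measurePreserving_piCongrLeft (fun _ : τ => ℝ) e
  have e2 := volume_measurePreserving_sumPiEquivProdPi_symm (fun _ : ι ⊕ κ => ℝ)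
  rw [← e1.lintegral_comp hf, ← e2.lintegral_comp (by fun_prop), Measure.volume_eq_prod,
    lintegral_prod _ (by fun_prop)]
  refine lintegral_congr fun x => lintegral_congr fun y => ?_
  congr 1
  ext i
  obtain ⟨i, rfl⟩ := e.surjective i
  rw [MeasurableEquiv.coe_piCongrLeft, Equiv.piCongrLeft_apply_apply]
  simp only [Equiv.symm_apply_apply]
  cases i <;> rfl

lemma lint2 (f : (Fin 2 → ℝ) → ℝ≥0∞) (hf : Measurable f) :
    ∫⁻ v, f v = ∫⁻ z : ℝ × ℝ, f ![z.1, z.2] := by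
  rw [← (volume_preserving_finTwoArrow ℝ).symm.lintegral_comp hf]
  rfl

lemma lint1 (f : (Fin 1 → ℝ) → ℝ≥0∞) (hf : Measurable f) :
    ∫⁻ v, f v = ∫⁻ z : ℝ, f ![z] := by
  have h := (volume_preserving_funUnique (Fin 1) ℝ).symm.lintegral_comp hf
  have h2 : ∫⁻ v, f v = ∫⁻ z : ℝ, f ((MeasurableEquiv.funUnique (Fin 1) ℝ).symm z) := by
    rw [h]
    congr!
  rw [h2]
  refine lintegral_congr fun x => ?_
  congr 1
  ext i
  fin_cases i
  rfl

lemma lint4 (f : (Fin 4 → ℝ) → ℝ≥0∞) (hf : Measurable f) :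
    ∫⁻ v, f v = ∫⁻ z : ℝ × ℝ, ∫⁻ w : ℝ × ℝ, f ![z.1, z.2, w.1, w.2] := by
  rw [lint_sum (finSumFinEquiv : Fin 2 ⊕ Fin 2 ≃ Fin 4) f hf, lint2]
  · refine lintegral_congr fun z => ?_
    rw [lint2]
    · refine lintegral_congr fun w => ?_
      congr 1
      ext i
      fin_cases i <;> rfl
    · refine hf.comp (measurable_pi_lambda _ fun i => ?_)
      rcases (finSumFinEquiv : Fin 2 ⊕ Fin 2 ≃ Fin 4).symm i with j | j <;> simp <;> fun_prop
  · refine Measurable.lintegral_prod_right' (f := fun p : (Fin 2 → ℝ) × (Fin 2 → ℝ) => 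
      f (fun i => Sum.elim p.1 p.2 (finSumFinEquiv.symm i))) ?_
    refine hf.comp (measurable_pi_lambda _ fun i => ?_)
    rcases (finSumFinEquiv : Fin 2 ⊕ Fin 2 ≃ Fin 4).symm i with j | j <;> simp <;> fun_prop

lemma lint3 (f : (Fin 3 → ℝ) → ℝ≥0∞) (hf : Measurable f) :
    ∫⁻ v, f v = ∫⁻ z : ℝ × ℝ, ∫⁻ t : ℝ, f ![z.1, z.2, t] := by
  rw [lint_sum (finSumFinEquiv : Fin 2 ⊕ Fin 1 ≃ Fin 3) f hf, lint2]
  · refine lintegral_congr fun z => ?_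
    rw [lint1]
    · refine lintegral_congr fun w => ?_
      congr 1
      ext i
      fin_cases i <;> rfl
    · refine hf.comp (measurable_pi_lambda _ fun i => ?_)
      rcases (finSumFinEquiv : Fin 2 ⊕ Fin 1 ≃ Fin 3).symm i with j | j <;> simp <;> fun_prop
  · refine Measurable.lintegral_prod_right' (f := fun p : (Fin 2 → ℝ) × (Fin 1 → ℝ) => 
      f (fun i => Sum.elim p.1 p.2 (finSumFinEquiv.symm i))) ?_
    refine hf.comp (measurable_pi_lambda _ fun i => ?_)
    rcases (finSumFinEquiv : Fin 2 ⊕ Fin 1 ≃ Fin 3).symm i with j | j <;> simp <;> fun_prop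

def eqv7 : Fin 3 ⊕ Fin 4 ≃ Fin 7 where
  toFun := Sum.elim ![0, 2, 5] ![1, 3, 4, 6]
  invFun := ![.inl 0, .inr 0, .inl 1, .inr 1, .inr 2, .inl 2, .inr 3]
  left_inv := by decide
  right_inv := by decide

lemma lint7 (f : (Fin 7 → ℝ) → ℝ≥0∞) (hf : Measurable f) :
    ∫⁻ v, f v = ∫⁻ u : Fin 3 → ℝ, ∫⁻ w : Fin 4 → ℝ, f (join u w) := by
  rw [lint_sum eqv7 f hf]
  refine lintegral_congr fun x => lintegral_congr fun y => ?_
  congr 1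
  ext i
  fin_cases i <;> rfl

lemma lint_mat {n : ℕ} (M : Matrix (Fin n) (Fin n) ℝ) (hM : M.det ≠ 0)
    (f : (Fin n → ℝ) → ℝ≥0∞) (hf : Measurable f) :
    ∫⁻ v, f v = ENNReal.ofReal |M.det| * ∫⁻ v, f (M.mulVec v) := by
  have h := Real.map_matrix_volume_pi_eq_smul_volume_pi hM
  have h2 : ∫⁻ v, f v ∂(Measure.map (Matrix.toLin' M) volume) = ∫⁻ v, f (M.mulVec v) := by
    rw [lintegral_map hf]
    · rfl
    · exact (LinearMap.continuous_of_finiteDimensional _).measurable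
  rw [← h2, h, lintegral_smul_measure, smul_eq_mul, ← mul_assoc, ← ENNReal.ofReal_mul (abs_nonneg _),
    ← abs_mul, mul_inv_cancel₀ hM]
  simp

lemma lint_radial (k : ℝ → ℝ≥0∞) (hk : Measurable k) :
    ∫⁻ z : ℝ × ℝ, k (√(z.1 ^ 2 + z.2 ^ 2)) =
      ENNReal.ofReal (2 * π) * ∫⁻ r in Set.Ioi (0:ℝ), ENNReal.ofReal r * k r := by
  rw [← lintegral_comp_polarCoord_symm]
  have : ∫⁻ p in polarCoord.target, ENNReal.ofReal p.1 • 
      k (√((polarCoord.symm p).1 ^ 2 + (polarCoord.symm p).2 ^ 2)) = 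
      ∫⁻ p in polarCoord.target, ENNReal.ofReal p.1 * k p.1 := by
    refine setLIntegral_congr_fun (polarCoord.open_target.measurableSet) fun p hp => ?_
    simp only [polarCoord_target, Set.mem_prod, Set.mem_Ioi] at hp
    simp only [polarCoord_symm_apply, smul_eq_mul]
    rw [show (p.1 * cos p.2) ^ 2 + (p.1 * sin p.2) ^ 2 = p.1 ^ 2 by
      linear_combination p.1 ^ 2 * (Real.sin_sq_add_cos_sq p.2), Real.sqrt_sq hp.1.le]
  rw [this, polarCoord_target, Measure.volume_eq_prod, ← Measure.prod_restrict,
    lintegral_prod _ (by fun_prop)]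
  simp only [lintegral_const, Measure.restrict_apply_univ, Real.volume_Ioo]
  rw [lintegral_mul_const _ (by fun_prop), mul_comm]
  congr 2
  ring
lemma lint_poly (a b : ℝ) (hab : a ≤ b) (P : ℝ → ℝ) (hP : Continuous P)
    (h0 : ∀ x, a < x → x ≤ b → 0 ≤ P x) :
    ∫⁻ x in Set.Ioc a b, ENNReal.ofReal (P x) = ENNReal.ofReal (∫ x in a..b, P x) := by
  rw [intervalIntegral.integral_of_le hab, ofReal_integral_eq_lintegral_ofReal]
  · exact (hP.integrableOn_Icc).mono_set Set.Ioc_subset_Icc_self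
  · exact (ae_restrict_iff' measurableSet_Ioc).2 (Filter.Eventually.of_forall fun x hx => h0 x hx.1 hx.2)

/-- change of variables splitting a `2 × 2` matrix in conformal and anticonformal parts -/
def m4 : Matrix (Fin 4) (Fin 4) ℝ :=
  !![1, 0, 1, 0; 0, -1, 0, 1; 0, 1, 0, 1; 1, 0, -1, 0]

lemma m4_det : |m4.det| = 4 := by
  simp [m4, Matrix.det_succ_row_zero, Fin.sum_univ_succ, Fin.succAbove]
  norm_num

lemma ctr_norm (z w : ℝ × ℝ) : m4.mulVec ![z.1, z.2, w.1, w.2] ∈ Ctr ↔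
    √(w.1 ^ 2 + w.2 ^ 2) ≤ 1 - √(z.1 ^ 2 + z.2 ^ 2) := by
  rw [ctr_iff]
  obtain ⟨p, q⟩ := z
  obtain ⟨r, s⟩ := w
  simp [m4, Matrix.mulVec, dotProduct, Fin.sum_univ_four]
  have hz : √(p ^ 2 + q ^ 2) ^ 2 = p ^ 2 + q ^ 2 := Real.sq_sqrt (by positivity)
  have hw : √(r ^ 2 + s ^ 2) ^ 2 = r ^ 2 + s ^ 2 := Real.sq_sqrt (by positivity)
  have hz0 := Real.sqrt_nonneg (p ^ 2 + q ^ 2)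
  have hw0 := Real.sqrt_nonneg (r ^ 2 + s ^ 2)
  generalize √(p ^ 2 + q ^ 2) = Z at *
  generalize √(r ^ 2 + s ^ 2) = W at *
  have key : (1 - (p + r) ^ 2 - (q + s) ^ 2) * (1 - (-q + s) ^ 2 - (p + -r) ^ 2)
      - (-((q + s) * (p + -r)) + -((p + r) * (-q + s))) ^ 2
      = (1 - (Z + W) ^ 2) * (1 - (Z - W) ^ 2) := by
    have : (1 - (Z + W) ^ 2) * (1 - (Z - W) ^ 2)
      = 1 - 2 * (Z ^ 2 + W ^ 2) + (Z ^ 2 - W ^ 2) ^ 2 := by ring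
    rw [this, hz, hw]; ring
  have key2 : 1 - (p + r) ^ 2 - (q + s) ^ 2 + (1 - (-q + s) ^ 2 - (p + -r) ^ 2)
    = 2 - 2 * (Z ^ 2 + W ^ 2) := by rw [hz, hw]; ring
  rw [key2, ← sub_nonneg (b := (_ : ℝ) ^ 2), key]
  clear key key2 hz hw
  have e : (Z - W) ^ 2 = 2 * (Z ^ 2 + W ^ 2) - (Z + W) ^ 2 := by ring
  constructor
  · rintro ⟨h1, h2⟩
    by_contra hc
    push Not at hc
    have h3 : 0 < (Z + W) ^ 2 - 1 := by
      have : 0 < (Z + W - 1) * (Z + W + 1) := mul_pos (by linarith) (by linarith)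
      linarith
    have h4 : 0 < 1 - (Z - W) ^ 2 := by linarith
    have := mul_pos h3 h4
    linarith
  · intro h
    have h3 : 0 ≤ 1 - (Z + W) ^ 2 := by
      have : 0 ≤ (1 - (Z + W)) * (Z + W + 1) := mul_nonneg (by linarith) (by linarith)
      linarith
    have h5 := mul_nonneg hz0 hw0
    have h4 : 0 ≤ 1 - (Z - W) ^ 2 := by linarith
    exact ⟨by linarith, mul_nonneg h3 h4⟩

lemma ctr_inner (ρ : ℝ) :
    ∫⁻ s in Set.Ioi (0:ℝ), ENNReal.ofReal s * (Set.Iic (1 - ρ)).indicator 1 s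
      = (Set.Iic 1).indicator (fun ρ => ENNReal.ofReal ((1 - ρ) ^ 2 / 2)) ρ := by
  have : ∀ s : ℝ, ENNReal.ofReal s * (Set.Iic (1 - ρ)).indicator (1 : ℝ → ℝ≥0∞) s =
      (Set.Iic (1 - ρ)).indicator (fun s => ENNReal.ofReal s) s := by
    intro s
    by_cases h : s ∈ Set.Iic (1 - ρ) <;> simp [Set.indicator, h]
  simp only [this]
  rw [lintegral_indicator measurableSet_Iic, Measure.restrict_restrict measurableSet_Iic,
    Set.inter_comm, Set.Ioi_inter_Iic]
  by_cases h : ρ ≤ 1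
  · rw [lint_poly 0 (1 - ρ) (by linarith) (fun x => x) continuous_id (fun x hx _ => hx.le)]
    simp [Set.indicator, h]
  · push Not at h
    rw [Set.Ioc_eq_empty (by linarith)]
    simp [Set.indicator, h]

lemma ctr_vol : volume Ctr = ENNReal.ofReal (2 * π ^ 2 / 3) := by
  rw [← lintegral_indicator_one measurableSet_ctr, lint_mat m4 (by
    intro h; have := m4_det; rw [h] at this; norm_num at this) _
    (measurable_one.indicator measurableSet_ctr), m4_det, lint4]
  · have e : ∀ z w : ℝ × ℝ, Ctr.indicator (1 : (Fin 4 → ℝ) → ℝ≥0∞) (m4.mulVec ![z.1, z.2, w.1, w.2])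
        = (Set.Iic (1 - √(z.1 ^ 2 + z.2 ^ 2))).indicator 1 (√(w.1 ^ 2 + w.2 ^ 2)) := by
      intro z w
      have := ctr_norm z w
      simp only [Set.indicator, this, Set.mem_Iic, Pi.one_apply]
    simp only [e]
    have e2 : ∀ z : ℝ × ℝ, ∫⁻ w : ℝ × ℝ,
        (Set.Iic (1 - √(z.1 ^ 2 + z.2 ^ 2))).indicator (1 : ℝ → ℝ≥0∞) (√(w.1 ^ 2 + w.2 ^ 2))
        = ENNReal.ofReal (2 * π) * (Set.Iic 1).indicator (fun ρ => ENNReal.ofReal ((1 - ρ) ^ 2 / 2))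
          (√(z.1 ^ 2 + z.2 ^ 2)) := by
      intro z
      rw [lint_radial _ (measurable_one.indicator measurableSet_Iic), ctr_inner]
    simp only [e2]
    have hm : Measurable ((Set.Iic 1).indicator (fun ρ : ℝ => ENNReal.ofReal ((1 - ρ) ^ 2 / 2))) :=
      Measurable.indicator (by fun_prop) measurableSet_Iic
    rw [lint_radial (fun ρ => ENNReal.ofReal (2 * π) *
      (Set.Iic 1).indicator (fun ρ => ENNReal.ofReal ((1 - ρ) ^ 2 / 2)) ρ) (by fun_prop)]
    have : ∀ s : ℝ, ENNReal.ofReal s * (ENNReal.ofReal (2 * π) *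
      (Set.Iic 1).indicator (fun ρ => ENNReal.ofReal ((1 - ρ) ^ 2 / 2)) s) =
      (Set.Iic 1).indicator (fun s => ENNReal.ofReal (2 * π * (s * ((1 - s) ^ 2 / 2)))) s := by
      intro s
      by_cases h : s ∈ Set.Iic 1
      · simp only [Set.indicator, h, if_true]
        rw [ENNReal.ofReal_mul (p := 2 * π) (by positivity),
          ENNReal.ofReal_mul' (p := s) (by positivity)]
        ring
      · simp [Set.indicator, h]
    simp only [this]
    rw [lintegral_indicator measurableSet_Iic, Measure.restrict_restrict measurableSet_Iic,
      Set.inter_comm, Set.Ioi_inter_Iic, lint_poly 0 1 (by norm_num)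
      (fun s => 2 * π * (s * ((1 - s) ^ 2 / 2))) (by fun_prop)
      (fun x hx _ => by positivity), intervalIntegral.integral_const_mul]
    have hI : ∫ s in (0:ℝ)..1, s * ((1 - s) ^ 2 / 2) = 1 / 24 := by
      rw [intervalIntegral.integral_eq_sub_of_hasDerivAt
        (f := fun s => s ^ 2 / 4 - s ^ 3 / 3 + s ^ 4 / 8)]
      · norm_num
      · intro x _
        have := (((hasDerivAt_pow 2 x).div_const 4).sub ((hasDerivAt_pow 3 x).div_const 3)).add
          ((hasDerivAt_pow 4 x).div_const 8)
        exact this.congr_deriv (by push_cast; ring)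
      · exact Continuous.intervalIntegrable (by fun_prop) _ _
    rw [hI, ← ENNReal.ofReal_mul (by positivity), ← ENNReal.ofReal_mul (by positivity)]
    congr 1
    ring
  · exact (measurable_one.indicator measurableSet_ctr).comp
      (Continuous.measurable (by fun_prop))

/-- change of variables for the symmetric `2 × 2` matrix -/
def m3 : Matrix (Fin 3) (Fin 3) ℝ := !![1, 0, 1; 0, 1, 0; -1, 0, 1]

lemma m3_det : m3.det = 2 := by
  simp [m3, Matrix.det_fin_three]; norm_num

lemma fiber_meas : Measurable (fun u : Fin 3 → ℝ => 
    volume {w : Fin 4 → ℝ | (choiR (join u w)).PosSemidef}) := by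
  have hj : Measurable (fun p : (Fin 3 → ℝ) × (Fin 4 → ℝ) => join p.1 p.2) := by
    refine measurable_pi_lambda _ fun i => ?_
    fin_cases i <;> simp [join] <;> fun_prop
  exact measurable_measure_prodMk_left (hj measurableSet_psd)

lemma vol_eq : volume {v : Fin 7 → ℝ | (choiR v).PosSemidef} =
    ∫⁻ u : Fin 3 → ℝ, volume {w : Fin 4 → ℝ | (choiR (join u w)).PosSemidef} := by
  rw [← lintegral_indicator_one measurableSet_psd,
    lint7 _ (measurable_one.indicator measurableSet_psd)]
  refine lintegral_congr fun u => ?_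
  have hj : Measurable (fun w => join u w) := by
    refine measurable_pi_lambda _ fun i => ?_
    fin_cases i <;> simp [join] <;> fun_prop
  exact lintegral_indicator_one (hj measurableSet_psd)

lemma fiber_eq (x y t r : ℝ) (hr : 0 ≤ r) (hxy : x ^ 2 + y ^ 2 = r ^ 2) (h1 : t ≠ r)
    (h2 : t ≠ 1 - r) :
    volume {w : Fin 4 → ℝ | (choiR (join (m3.mulVec ![x, y, t]) w)).PosSemidef} =
      (Set.Ioc r (1 - r)).indicator
        (fun t => ENNReal.ofReal ((t ^ 2 - r ^ 2) * ((1 - t) ^ 2 - r ^ 2))) t * volume Ctr := by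
  have a0 : m3.mulVec ![x, y, t] 0 = t + x := by
    simp [m3, Matrix.mulVec, dotProduct, Fin.sum_univ_three]; ring
  have a1 : m3.mulVec ![x, y, t] 1 = y := by
    simp [m3, Matrix.mulVec, dotProduct, Fin.sum_univ_three]
  have a2 : m3.mulVec ![x, y, t] 2 = t - x := by
    simp [m3, Matrix.mulVec, dotProduct, Fin.sum_univ_three]; ring
  by_cases h : t ∈ Set.Ioc r (1 - r)
  · have hlt : t < 1 - r := lt_of_le_of_ne h.2 h2
    have hgt : r < t := h.1
    have hx : |x| ≤ r := by
      refine abs_le_of_sq_le_sq ?_ hr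
      nlinarith [sq_nonneg y]
    have hx' := abs_le.1 hx
    rw [fiber_vol]
    · rw [a0, a1, a2]
      simp only [Set.indicator, h, if_true]
      congr 2
      rw [← hxy]; ring
    · rw [a0]; linarith
    · rw [a0, a1, a2]; nlinarith
    · rw [a0]; linarith
    · rw [a0, a1, a2]; nlinarith
  · simp only [Set.indicator, h, if_false, zero_mul]
    have : {w : Fin 4 → ℝ | (choiR (join (m3.mulVec ![x, y, t]) w)).PosSemidef} = ∅ := by
      rw [Set.eq_empty_iff_forall_notMem]
      intro w hw
      have hw' := fiber_empty _ _ hw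
      rw [a0, a1, a2] at hw'
      obtain ⟨⟨b1, b2⟩, b3, b4⟩ := hw'
      apply h
      constructor
      · refine lt_of_le_of_ne ?_ (Ne.symm h1)
        apply abs_le_of_sq_le_sq' (by nlinarith) (by linarith) |>.2
      · have : r ≤ 1 - t := abs_le_of_sq_le_sq' (by nlinarith) (by linarith) |>.2
        linarith
    rw [this]; simp

lemma inner_t (r : ℝ) (hr : r ≤ 1 / 2) : ∫ t in r..(1 - r), (t ^ 2 - r ^ 2) * ((1 - t) ^ 2 - r ^ 2)
    = 4 / 3 * (1 / 2 - r) ^ 3 * (1 / 2 + r) ^ 2 - 4 / 15 * (1 / 2 - r) ^ 5 := by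
  rw [intervalIntegral.integral_eq_sub_of_hasDerivAt
    (f := fun t => t ^ 5 / 5 - t ^ 4 / 2 + (1 - 2 * r ^ 2) * t ^ 3 / 3 + r ^ 2 * t ^ 2
      - r ^ 2 * (1 - r ^ 2) * t ^ 1)]
  · ring
  · intro x _
    have := ((((hasDerivAt_pow 5 x).div_const 5).sub ((hasDerivAt_pow 4 x).div_const 2)).add
      (((hasDerivAt_pow 3 x).const_mul (1 - 2 * r ^ 2)).div_const 3)).add
      ((hasDerivAt_pow 2 x).const_mul (r ^ 2)) |>.sub
      ((hasDerivAt_pow 1 x).const_mul (r ^ 2 * (1 - r ^ 2)))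
    exact this.congr_deriv (by push_cast; ring)
  · exact Continuous.intervalIntegrable (by fun_prop) _ _

lemma int_t (z : ℝ × ℝ) :
    ∫⁻ t : ℝ, volume {w : Fin 4 → ℝ | (choiR (join (m3.mulVec ![z.1, z.2, t]) w)).PosSemidef} =
      (Set.Iic (1 / 2)).indicator (fun r => ENNReal.ofReal
        (4 / 3 * (1 / 2 - r) ^ 3 * (1 / 2 + r) ^ 2 - 4 / 15 * (1 / 2 - r) ^ 5))
        (√(z.1 ^ 2 + z.2 ^ 2)) * volume Ctr := by
  have hr0 := Real.sqrt_nonneg (z.1 ^ 2 + z.2 ^ 2)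
  have hz : z.1 ^ 2 + z.2 ^ 2 = √(z.1 ^ 2 + z.2 ^ 2) ^ 2 := (Real.sq_sqrt (by positivity)).symm
  generalize √(z.1 ^ 2 + z.2 ^ 2) = r at *
  have hae : ∀ᵐ t : ℝ, t ≠ r ∧ t ≠ 1 - r :=
    (Measure.ae_ne volume r).and (Measure.ae_ne volume (1 - r))
  rw [lintegral_congr_ae (hae.mono fun t ht => fiber_eq z.1 z.2 t r hr0 hz ht.1 ht.2),
    lintegral_mul_const _ (Measurable.indicator (by fun_prop) measurableSet_Ioc),
    lintegral_indicator measurableSet_Ioc]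
  congr 1
  by_cases h : r ≤ 1 / 2
  · rw [lint_poly r (1 - r) (by linarith) (fun t => (t ^ 2 - r ^ 2) * ((1 - t) ^ 2 - r ^ 2))
      (by fun_prop), inner_t r h]
    · simp only [Set.indicator, Set.mem_Iic, h, if_true]
    · intro t h1 h2
      apply mul_nonneg <;> nlinarith
  · simp only [Set.indicator, Set.mem_Iic, h, if_false]
    push Not at h
    rw [Set.Ioc_eq_empty (by linarith)]
    simp

lemma final_int : ∫ r in (0:ℝ)..(1/2), r * (4 / 3 * (1 / 2 - r) ^ 3 * (1 / 2 + r) ^ 2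
    - 4 / 15 * (1 / 2 - r) ^ 5) = 1 / 1120 := by
  rw [intervalIntegral.integral_eq_sub_of_hasDerivAt
    (f := fun r => r ^ 2 / 60 - r ^ 4 / 6 + r ^ 5 * (4 / 15) - r ^ 7 * (16 / 105))]
  · norm_num
  · intro x _
    have := ((((hasDerivAt_pow 2 x).div_const 60).sub ((hasDerivAt_pow 4 x).div_const 6)).add
      ((hasDerivAt_pow 5 x).mul_const (4 / 15))).sub ((hasDerivAt_pow 7 x).mul_const (16 / 105))
    exact this.congr_deriv (by push_cast; ring)
  · exact Continuous.intervalIntegrable (by fun_prop) _ _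

lemma main_vol : volume {v : Fin 7 → ℝ | (choiR v).PosSemidef} = ENNReal.ofReal (π ^ 3 / 420) := by
  rw [vol_eq, lint_mat m3 (by rw [m3_det]; norm_num) _ fiber_meas, m3_det, lint3]
  · simp only [int_t]
    have hm : Measurable ((Set.Iic (1 / 2)).indicator (fun r : ℝ => ENNReal.ofReal
        (4 / 3 * (1 / 2 - r) ^ 3 * (1 / 2 + r) ^ 2 - 4 / 15 * (1 / 2 - r) ^ 5))) :=
      Measurable.indicator (by fun_prop) measurableSet_Iic
    rw [lintegral_mul_const _ (by fun_prop), lint_radial _ hm]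
    have : ∀ s ∈ Set.Ioi (0:ℝ), ENNReal.ofReal s * (Set.Iic (1 / 2)).indicator (fun r : ℝ => ENNReal.ofReal
        (4 / 3 * (1 / 2 - r) ^ 3 * (1 / 2 + r) ^ 2 - 4 / 15 * (1 / 2 - r) ^ 5)) s =
      (Set.Iic (1 / 2)).indicator (fun r : ℝ => ENNReal.ofReal
        (r * (4 / 3 * (1 / 2 - r) ^ 3 * (1 / 2 + r) ^ 2 - 4 / 15 * (1 / 2 - r) ^ 5))) s := by
      intro s hs
      by_cases h : s ∈ Set.Iic (1 / 2)
      · simp only [Set.indicator, h, if_true]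
        rw [ENNReal.ofReal_mul (le_of_lt hs)]
      · simp only [Set.indicator, h, if_false, mul_zero]
    rw [setLIntegral_congr_fun measurableSet_Ioi this, lintegral_indicator measurableSet_Iic,
      Measure.restrict_restrict measurableSet_Iic,
      Set.inter_comm, Set.Ioi_inter_Iic, lint_poly 0 (1 / 2) (by norm_num)
      (fun r => r * (4 / 3 * (1 / 2 - r) ^ 3 * (1 / 2 + r) ^ 2 - 4 / 15 * (1 / 2 - r) ^ 5))
      (by fun_prop), final_int, ctr_vol,
      ← ENNReal.ofReal_mul (by positivity), ← ENNReal.ofReal_mul (by positivity),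
      ← ENNReal.ofReal_mul (by positivity)]
    · congr 1
      rw [abs_of_pos (by norm_num)]
      ring
    · intro x hx h2
      apply mul_nonneg hx.le
      have h3 : 0 ≤ (1 / 2 - x) ^ 3 := pow_nonneg (by linarith) 3
      have : 4 / 3 * (1 / 2 - x) ^ 3 * (1 / 2 + x) ^ 2 - 4 / 15 * (1 / 2 - x) ^ 5
        = (1 / 2 - x) ^ 3 * (4 / 3 * (1 / 2 + x) ^ 2 - 4 / 15 * (1 / 2 - x) ^ 2) := by ring
      rw [this]
      exact mul_nonneg h3 (by nlinarith)
  · exact fiber_meas.comp (Continuous.measurable (by fun_prop))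

/-- The volume of the space of real qubit channels `𝒬_ℝ ⊆ ℝ⁷` (with volume element `2⁴ dλ₇`)
equals `4π³/105`. -/
theorem stmt_12 :
    2 ^ 4 * volume {v : Fin 7 → ℝ | (choiR v).PosSemidef} =
      ENNReal.ofReal (4 * π ^ 3 / 105) := by
  rw [main_vol, show (2 : ℝ≥0∞) ^ 4 = ENNReal.ofReal 16 by norm_num, ← ENNReal.ofReal_mul (by norm_num)]
  congr 1
  ring
end

section
/- For the real qubit channels over a fixed classical channel with parameters a, f ∈ [0,1], the fibre volume is V(a,f) = (128/45)π² · (af)^{3/2}(5(1−a)(1−f) − af) if a + f < 1, and V(a,f) = (128/45)π² · ((1−a)(1−f))^{3/2}(5af − (1−a)(1−f)) if a + f ≥ 1. Equivalently, ∫_{ℝ⁵} 2⁴·𝟙[Q(a,b,c,d,e,f,g) ≥ 0] dλ₅(b,c,d,e,g) equals these expressions. -/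
open MeasureTheory Real

/-- The Choi matrix of a real qubit channel over the classical channel `(a,f)`, with free
parameters `(b,c,d,e,g) ∈ ℝ⁵`. -/
noncomputable def choiRaf (a f : ℝ) (w : Fin 5 → ℝ) : Matrix (Fin 4) (Fin 4) ℝ :=
  !![a, w 0, w 1, w 2;
     w 0, 1 - a, w 3, -(w 1);
     w 1, w 3, f, w 4;
     w 2, -(w 1), w 4, 1 - f]

/-- The normalised matrix with unit diagonal. -/
noncomputable def normMat (k : Fin 4 → ℝ) : Matrix (Fin 4) (Fin 4) ℝ :=
  !![1, k 0, 0, k 1;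
     k 0, 1, k 2, 0;
     0, k 2, 1, k 3;
     k 1, 0, k 3, 1]

/-- The conformal / anticonformal coordinates on 2×2 matrices. -/
noncomputable def confMat : Matrix (Fin 4) (Fin 4) ℝ :=
  !![1, 0, 1, 0;
     0, -1, 0, 1;
     0, 1, 0, 1;
     1, 0, -1, 0]

/-- The matrix of `K ↦ L K Mᵀ`. -/
noncomputable def cholMat (l₁ l₂ l₃ m₁ m₂ m₃ : ℝ) : Matrix (Fin 4) (Fin 4) ℝ :=
  !![l₁ * m₁, 0, 0, 0;
     l₁ * m₂, l₁ * m₃, 0, 0;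
     m₁ * l₂, 0, m₁ * l₃, 0;
     m₂ * l₂, m₃ * l₂, m₂ * l₃, m₃ * l₃]

/-- The block Cholesky factor. -/
noncomputable def cholFac (l₁ l₂ l₃ m₁ m₂ m₃ : ℝ) : Matrix (Fin 4) (Fin 4) ℝ :=
  !![l₁, 0, 0, 0;
     0, m₁, 0, 0;
     l₂, 0, l₃, 0;
     0, m₂, 0, m₃]

lemma det_confMat : confMat.det = 4 ∨ confMat.det = -4 := by
  simp [confMat, Matrix.det_succ_row_zero, Fin.sum_univ_succ, Fin.succAbove]
  norm_num

lemma det_cholMat (l₁ l₂ l₃ m₁ m₂ m₃ : ℝ) :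
    (cholMat l₁ l₂ l₃ m₁ m₂ m₃).det = (l₁ * l₃) ^ 2 * (m₁ * m₃) ^ 2 := by
  simp [cholMat, Matrix.det_succ_row_zero, Fin.sum_univ_succ, Fin.succAbove]
  ring

lemma det_cholFac (l₁ l₂ l₃ m₁ m₂ m₃ : ℝ) :
    (cholFac l₁ l₂ l₃ m₁ m₂ m₃).det = (l₁ * l₃) * (m₁ * m₃) := by
  simp [cholFac, Matrix.det_succ_row_zero, Fin.sum_univ_succ, Fin.succAbove]
  ring

lemma choi_factor (l₁ l₂ l₃ m₁ m₂ m₃ a f c : ℝ) (h1 : a = l₁ ^ 2) (h2 : c = l₁ * l₂)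
    (h3 : f = l₂ ^ 2 + l₃ ^ 2) (h4 : 1 - a = m₁ ^ 2) (h5 : -c = m₁ * m₂)
    (h6 : 1 - f = m₂ ^ 2 + m₃ ^ 2) (k : Fin 4 → ℝ) :
    choiRaf a f (Fin.insertNth (α := fun _ => ℝ) 1 c ((cholMat l₁ l₂ l₃ m₁ m₂ m₃).mulVec k)) =
      cholFac l₁ l₂ l₃ m₁ m₂ m₃ * normMat k * star (cholFac l₁ l₂ l₃ m₁ m₂ m₃) := by
  have e0 : ∀ v : Fin 4 → ℝ, (Fin.insertNth (α := fun _ => ℝ) 1 c v : Fin 5 → ℝ) =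
      ![v 0, c, v 1, v 2, v 3] := by
    intro v; ext i; fin_cases i <;> rfl
  rw [e0]
  unfold choiRaf
  simp only [Matrix.cons_val]
  rw [h6, h5, h4, h3, h2, h1]
  ext i j
  fin_cases i <;> fin_cases j <;>
    simp [cholMat, cholFac, normMat, Matrix.mul_apply, Fin.sum_univ_succ, Matrix.mulVec,
      dotProduct] <;> ring

lemma sum_le_one_iff (A B : ℝ) (hA : 0 ≤ A) (hB : 0 ≤ B) :
    √A + √B ≤ 1 ↔ A + B ≤ 1 ∧ 0 ≤ 1 - 2 * (A + B) + (A - B) ^ 2 := by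
  obtain ⟨s, hs, rfl⟩ : ∃ s, 0 ≤ s ∧ A = s ^ 2 := ⟨√A, Real.sqrt_nonneg _, (Real.sq_sqrt hA).symm⟩
  obtain ⟨t, ht, rfl⟩ : ∃ s, 0 ≤ s ∧ B = s ^ 2 := ⟨√B, Real.sqrt_nonneg _, (Real.sq_sqrt hB).symm⟩
  rw [Real.sqrt_sq hs, Real.sqrt_sq ht]
  have key : 1 - 2 * (s ^ 2 + t ^ 2) + (s ^ 2 - t ^ 2) ^ 2 =
    (1 - (s + t) ^ 2) * (1 - (s - t) ^ 2) := by ring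
  rw [key]
  constructor
  · intro h
    have h1 : (s + t) ^ 2 ≤ 1 := by nlinarith
    have h2 : (s - t) ^ 2 ≤ 1 := by nlinarith
    exact ⟨by nlinarith, mul_nonneg (by linarith) (by linarith)⟩
  · rintro ⟨h1, h2⟩
    by_contra! h
    have h3 : 1 < (s + t) ^ 2 := by nlinarith
    have h4 : 1 ≤ (s - t) ^ 2 := by
      by_contra! h4
      nlinarith [mul_pos (sub_pos.2 h3) (sub_pos.2 h4)]
    nlinarith

lemma quad_nonneg_iff (P R S : ℝ) : (∀ x y : ℝ, 0 ≤ P * x ^ 2 + 2 * R * x * y + S * y ^ 2) ↔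
    0 ≤ P + S ∧ 0 ≤ P * S - R ^ 2 := by
  constructor
  · intro h
    have hP : 0 ≤ P := by simpa using h 1 0
    have hS : 0 ≤ S := by simpa using h 0 1
    refine ⟨by linarith, ?_⟩
    by_contra! hn
    rcases hP.eq_or_lt with hP0 | hP0
    · subst hP0
      have hR : 0 < R ^ 2 := by nlinarith
      have hR' : R ≠ 0 := by rintro rfl; simp at hR
      have := h (-(S + 1) / (2 * R)) 1
      have e : 2 * R * (-(S + 1) / (2 * R)) = -(S + 1) := by field_simp
      rw [e] at this
      linarith
    · have := h (-R) P
      nlinarith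
  · rintro ⟨h1, h2⟩ x y
    have hPS : 0 ≤ P * S := by nlinarith [sq_nonneg R]
    have hP : 0 ≤ P := by
      by_contra! hP
      have : 0 < S := by linarith
      nlinarith
    have hS : 0 ≤ S := by
      by_contra! hP
      have : 0 < P := by linarith
      nlinarith
    rcases hP.eq_or_lt with hP0 | hP0
    · subst hP0
      have hR : R = 0 := by
        have : R ^ 2 ≤ 0 := by linarith
        nlinarith [pow_eq_zero_iff (two_ne_zero) |>.1 (le_antisymm this (sq_nonneg R))]
      subst hR
      have := mul_nonneg hS (sq_nonneg y)
      linarith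
    · have : 0 ≤ P * (P * x ^ 2 + 2 * R * x * y + S * y ^ 2) := by
        have e : P * (P * x ^ 2 + 2 * R * x * y + S * y ^ 2) =
          (P * x + R * y) ^ 2 + (P * S - R ^ 2) * y ^ 2 := by ring
        rw [e]; positivity
      exact nonneg_of_mul_nonneg_right this hP0

lemma normMat_psd (k : Fin 4 → ℝ) : (normMat k).PosSemidef ↔
    ∀ x y : ℝ, 0 ≤ (1 - k 0 ^ 2 - k 2 ^ 2) * x ^ 2 + 2 * (-(k 0 * k 1 + k 2 * k 3)) * x * y +
      (1 - k 1 ^ 2 - k 3 ^ 2) * y ^ 2 := by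
  rw [Matrix.posSemidef_iff_dotProduct_mulVec]
  have hH : (normMat k).IsHermitian := by
    ext i j
    fin_cases i <;> fin_cases j <;> simp [normMat]
  have hq : ∀ v : Fin 4 → ℝ, star v ⬝ᵥ ((normMat k).mulVec v) =
      (v 0 + (k 0 * v 1 + k 1 * v 3)) ^ 2 + (v 2 + (k 2 * v 1 + k 3 * v 3)) ^ 2 +
      ((1 - k 0 ^ 2 - k 2 ^ 2) * v 1 ^ 2 + 2 * (-(k 0 * k 1 + k 2 * k 3)) * v 1 * v 3 +
      (1 - k 1 ^ 2 - k 3 ^ 2) * v 3 ^ 2) := by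
    intro v
    simp [normMat, Fin.sum_univ_succ, Matrix.mulVec, dotProduct]
    ring
  constructor
  · rintro ⟨-, h⟩ x y
    have := h ![-(k 0 * x + k 1 * y), x, -(k 2 * x + k 3 * y), y]
    rw [hq] at this
    simpa using this
  · intro h
    refine ⟨hH, fun v => ?_⟩
    rw [hq]
    have := h (v 1) (v 3)
    positivity

lemma normMat_conf_psd (y : Fin 4 → ℝ) : (normMat (confMat.mulVec y)).PosSemidef ↔
    √(y 0 ^ 2 + y 1 ^ 2) + √(y 2 ^ 2 + y 3 ^ 2) ≤ 1 := by
  rw [normMat_psd, quad_nonneg_iff, sum_le_one_iff _ _ (by positivity) (by positivity)]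
  have h0 : confMat.mulVec y 0 = y 0 + y 2 := by
    simp [confMat, Fin.sum_univ_succ, Matrix.mulVec, dotProduct]
  have h1 : confMat.mulVec y 1 = y 3 - y 1 := by
    simp [confMat, Fin.sum_univ_succ, Matrix.mulVec, dotProduct]; ring
  have h2 : confMat.mulVec y 2 = y 1 + y 3 := by
    simp [confMat, Fin.sum_univ_succ, Matrix.mulVec, dotProduct]
  have h3 : confMat.mulVec y 3 = y 0 - y 2 := by
    simp [confMat, Fin.sum_univ_succ, Matrix.mulVec, dotProduct]; ring
  rw [h0, h1, h2, h3]
  refine and_congr ?_ ?_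
  · constructor <;> intro h <;> nlinarith
  · refine iff_of_eq (congrArg _ ?_)
    ring

lemma mp_complex : MeasurePreserving
    (fun x : Fin 2 → ℂ => (![(x 0).re, (x 0).im, (x 1).re, (x 1).im] : Fin 4 → ℝ)) := by
  have hm : Measurable
      (fun x : Fin 2 → ℂ => (![(x 0).re, (x 0).im, (x 1).re, (x 1).im] : Fin 4 → ℝ)) := by
    rw [measurable_pi_iff]
    intro i
    fin_cases i <;> simp <;> fun_prop
  refine ⟨hm, ?_⟩
  symm
  refine Measure.pi_eq fun s hs => ?_
  rw [Measure.map_apply hm (MeasurableSet.univ_pi hs)]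
  have hc : ∀ s t : Set ℝ, MeasurableSet s → MeasurableSet t →
      volume (s ×ℂ t) = volume s * volume t := by
    intro s t hs ht
    have := Complex.volume_preserving_equiv_real_prod.measure_preimage
      (hs.prod ht).nullMeasurableSet
    rw [Measure.volume_eq_prod, Measure.prod_prod] at this
    rw [← this]; rfl
  have : (fun x : Fin 2 → ℂ => (![(x 0).re, (x 0).im, (x 1).re, (x 1).im] : Fin 4 → ℝ)) ⁻¹'
      (Set.univ.pi s) = Set.univ.pi ![s 0 ×ℂ s 1, s 2 ×ℂ s 3] := by
    ext x
    simp [Set.mem_pi, Fin.forall_fin_succ, Complex.mem_reProdIm, and_assoc]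
  rw [this, volume_pi_pi]
  simp [Fin.prod_univ_succ, hc _ _ (hs 0) (hs 1), hc _ _ (hs 2) (hs 3), mul_assoc]

lemma volume_unit : volume {y : Fin 4 → ℝ | √(y 0 ^ 2 + y 1 ^ 2) + √(y 2 ^ 2 + y 3 ^ 2) ≤ 1} =
    ENNReal.ofReal (π ^ 2 / 6) := by
  have hms : MeasurableSet {y : Fin 4 → ℝ | √(y 0 ^ 2 + y 1 ^ 2) + √(y 2 ^ 2 + y 3 ^ 2) ≤ 1} :=
    measurableSet_le (by fun_prop) (by fun_prop)
  rw [← mp_complex.measure_preimage hms.nullMeasurableSet]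
  have := Complex.volume_sum_rpow_le (ι := Fin 2) (p := 1) le_rfl 1
  simp only [rpow_one, Fin.sum_univ_two, div_one, ENNReal.ofReal_one, one_pow, one_mul,
    Fintype.card_fin] at this
  have h3 : Real.Gamma (2 + 1) = 2 := by
    have := Real.Gamma_nat_eq_factorial 2
    norm_num [Nat.factorial] at this ⊢
  have h5 : Real.Gamma (2 * (2 : ℕ) + 1) = 24 := by
    have := Real.Gamma_nat_eq_factorial 4
    norm_num [Nat.factorial] at this ⊢
  rw [h3, h5] at this
  have e : (π * 2) ^ 2 / 24 = π ^ 2 / 6 := by ring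
  rw [e] at this
  rw [← this]
  congr 1
  ext x
  simp [Complex.norm_eq_sqrt_sq_add_sq]

lemma fiber_volume (a f c : ℝ) (ha : a ∈ Set.Icc (0 : ℝ) 1) (hf : f ∈ Set.Icc (0 : ℝ) 1)
    (h1 : c ^ 2 < a * f) (h2 : c ^ 2 < (1 - a) * (1 - f)) :
    volume {v : Fin 4 → ℝ | (choiRaf a f (Fin.insertNth (α := fun _ => ℝ) 1 c v)).PosSemidef} =
      ENNReal.ofReal (2 * π ^ 2 / 3 * ((a * f - c ^ 2) * ((1 - a) * (1 - f) - c ^ 2))) := by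
  have ha0 : 0 < a := by
    rcases ha.1.eq_or_lt with h | h
    · subst h; nlinarith [sq_nonneg c]
    · exact h
  have ha1 : 0 < 1 - a := by
    rcases (sub_nonneg.2 ha.2).eq_or_lt with h | h
    · rw [← h] at h2; nlinarith [sq_nonneg c]
    · exact h
  obtain ⟨l₁, hl₁, el₁⟩ : ∃ s, 0 < s ∧ a = s ^ 2 :=
    ⟨√a, Real.sqrt_pos.2 ha0, (Real.sq_sqrt ha0.le).symm⟩
  obtain ⟨m₁, hm₁, em₁⟩ : ∃ s, 0 < s ∧ 1 - a = s ^ 2 :=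
    ⟨√(1 - a), Real.sqrt_pos.2 ha1, (Real.sq_sqrt ha1.le).symm⟩
  obtain ⟨p, hp, ep⟩ : ∃ s, 0 < s ∧ a * f - c ^ 2 = s ^ 2 :=
    ⟨√(a * f - c ^ 2), Real.sqrt_pos.2 (by linarith), (Real.sq_sqrt (by linarith)).symm⟩
  obtain ⟨q, hq, eq⟩ : ∃ s, 0 < s ∧ (1 - a) * (1 - f) - c ^ 2 = s ^ 2 :=
    ⟨√((1 - a) * (1 - f) - c ^ 2), Real.sqrt_pos.2 (by linarith),
      (Real.sq_sqrt (by linarith)).symm⟩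
  have hfac := choi_factor l₁ (c / l₁) (p / l₁) m₁ (-c / m₁) (q / m₁) a f c el₁
    (by field_simp) (by rw [el₁] at ep; field_simp; linarith) em₁ (by field_simp)
    (by rw [em₁] at eq; field_simp; linarith)
  have hd1 := det_cholMat l₁ (c / l₁) (p / l₁) m₁ (-c / m₁) (q / m₁)
  have hd2 := det_cholFac l₁ (c / l₁) (p / l₁) m₁ (-c / m₁) (q / m₁)
  rw [mul_div_cancel₀ _ hl₁.ne', mul_div_cancel₀ _ hm₁.ne'] at hd1 hd2
  set F := cholFac l₁ (c / l₁) (p / l₁) m₁ (-c / m₁) (q / m₁)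
  set A := cholMat l₁ (c / l₁) (p / l₁) m₁ (-c / m₁) (q / m₁)
  have hF : IsUnit F := by
    rw [Matrix.isUnit_iff_isUnit_det, hd2]
    exact (mul_pos hp hq).ne'.isUnit
  have hdet : |LinearMap.det (Matrix.toLin' (A * confMat))| = 4 * (p ^ 2 * q ^ 2) := by
    rw [LinearMap.det_toLin', Matrix.det_mul, hd1, abs_mul, abs_of_pos (by positivity)]
    rcases det_confMat with h | h <;> rw [h] <;> norm_num <;> ring
  have hpos : 0 < 4 * (p ^ 2 * q ^ 2) := by positivity
  have hne : LinearMap.det (Matrix.toLin' (A * confMat)) ≠ 0 := by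
    rw [← abs_pos, hdet]; exact hpos
  have key := Measure.addHaar_preimage_linearMap (volume : Measure (Fin 4 → ℝ)) hne
    {v : Fin 4 → ℝ | (choiRaf a f (Fin.insertNth (α := fun _ => ℝ) 1 c v)).PosSemidef}
  have hset : (Matrix.toLin' (A * confMat)) ⁻¹'
    {v : Fin 4 → ℝ | (choiRaf a f (Fin.insertNth (α := fun _ => ℝ) 1 c v)).PosSemidef} =
    {y : Fin 4 → ℝ | √(y 0 ^ 2 + y 1 ^ 2) + √(y 2 ^ 2 + y 3 ^ 2) ≤ 1} := by
    ext y
    rw [Set.mem_preimage, Set.mem_ofPred_eq, Set.mem_ofPred_eq, Matrix.toLin'_apply,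
      ← Matrix.mulVec_mulVec, hfac, Matrix.IsUnit.posSemidef_star_right_conjugate_iff hF,
      normMat_conf_psd]
  rw [hset, volume_unit, abs_inv, hdet] at key
  rw [ep, eq]
  have e : 2 * π ^ 2 / 3 * (p ^ 2 * q ^ 2) = (4 * (p ^ 2 * q ^ 2)) * (π ^ 2 / 6) := by ring
  rw [e, ENNReal.ofReal_mul hpos.le, key, ← mul_assoc, ← ENNReal.ofReal_mul hpos.le,
    mul_inv_cancel₀ hpos.ne', ENNReal.ofReal_one, one_mul]

lemma fiber_empty_s13 (a f c : ℝ) (v : Fin 4 → ℝ)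
    (h : (choiRaf a f (Fin.insertNth (α := fun _ => ℝ) 1 c v)).PosSemidef) :
    c ^ 2 ≤ a * f ∧ c ^ 2 ≤ (1 - a) * (1 - f) := by
  constructor
  · have := (h.submatrix ![0, 2]).det_nonneg
    rw [Matrix.det_fin_two] at this
    have e1 : (Fin.insertNth (α := fun _ => ℝ) 1 c v : Fin 5 → ℝ) 1 = c := rfl
    simp only [choiRaf, Matrix.submatrix_apply, e1] at this
    simp at this
    nlinarith
  · have := (h.submatrix ![1, 3]).det_nonneg
    rw [Matrix.det_fin_two] at this
    have e1 : (Fin.insertNth (α := fun _ => ℝ) 1 c v : Fin 5 → ℝ) 1 = c := rfl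
    simp only [choiRaf, Matrix.submatrix_apply, e1] at this
    simp at this
    nlinarith

lemma measurable_psd (a f : ℝ) : MeasurableSet {w : Fin 5 → ℝ | (choiRaf a f w).PosSemidef} := by
  have : {w : Fin 5 → ℝ | (choiRaf a f w).PosSemidef} =
      ⋂ x : Fin 4 → ℝ, {w | 0 ≤ star x ⬝ᵥ ((choiRaf a f w).mulVec x)} := by
    ext w
    have hH : (choiRaf a f w).IsHermitian := by
      ext i j
      fin_cases i <;> fin_cases j <;> simp [choiRaf]
    rw [Set.mem_iInter]
    exact Matrix.posSemidef_iff_dotProduct_mulVec.trans (and_iff_right hH)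
  rw [this]
  refine (isClosed_iInter fun x => ?_).measurableSet
  refine isClosed_le continuous_const ?_
  simp [choiRaf, Fin.sum_univ_succ, Matrix.mulVec, dotProduct]
  fun_prop

lemma integral_aux (p q : ℝ) (hp : 0 ≤ p) (hpq : p ≤ q) :
    ∫⁻ c in Set.Ioo (-√p) (√p), ENNReal.ofReal (2 * π ^ 2 / 3 * ((p - c ^ 2) * (q - c ^ 2))) =
    ENNReal.ofReal (8 / 45 * π ^ 2 * p ^ ((3 : ℝ) / 2) * (5 * q - p)) := by
  have hs : 0 ≤ √p := Real.sqrt_nonneg p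
  have hcont : Continuous fun c : ℝ => 2 * π ^ 2 / 3 * ((p - c ^ 2) * (q - c ^ 2)) := by fun_prop
  rw [← ofReal_integral_eq_lintegral_ofReal]
  · rw [← integral_Ioc_eq_integral_Ioo, ← intervalIntegral.integral_of_le (by linarith)]
    congr 1
    have hd : ∀ c ∈ Set.uIcc (-√p) (√p), HasDerivAt
        (fun c : ℝ => 2 * π ^ 2 / 3 * (p * q * c - (p + q) * c ^ 3 / 3 + c ^ 5 / 5))
        (2 * π ^ 2 / 3 * ((p - c ^ 2) * (q - c ^ 2))) c := by
      intro c _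
      have h1 := ((hasDerivAt_id c).const_mul (p * q))
      have h3 := (((hasDerivAt_pow 3 c).const_mul (p + q)).div_const 3)
      have h5 := ((hasDerivAt_pow 5 c).div_const 5)
      have := (((h1.sub h3).add h5).const_mul (2 * π ^ 2 / 3))
      refine this.congr_deriv ?_
      push_cast
      ring
    rw [intervalIntegral.integral_eq_sub_of_hasDerivAt hd (hcont.intervalIntegrable _ _)]
    have e : p ^ ((3 : ℝ) / 2) = √p ^ 3 := by
      rw [Real.sqrt_eq_rpow, ← Real.rpow_natCast, ← Real.rpow_mul hp]; norm_num
    rw [e]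
    have hsq : p = √p ^ 2 := (Real.sq_sqrt hp).symm
    generalize √p = s at *
    subst hsq
    ring
  · exact (hcont.integrableOn_Icc (a := -√p) (b := √p)).mono_set Set.Ioo_subset_Icc_self
  · refine (ae_restrict_iff' measurableSet_Ioo).2 (ae_of_all _ fun c hc => ?_)
    have : c ^ 2 ≤ p := Real.sq_le hp |>.2 ⟨hc.1.le, hc.2.le⟩
    have h1 : 0 ≤ p - c ^ 2 := by linarith
    have h2 : 0 ≤ q - c ^ 2 := by linarith
    simp only [Pi.zero_apply]
    positivity

lemma volume_min (a f m M : ℝ) (ha : a ∈ Set.Icc (0 : ℝ) 1) (hf : f ∈ Set.Icc (0 : ℝ) 1)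
    (hm : 0 ≤ m) (hmM : m ≤ M)
    (h : (m = a * f ∧ M = (1 - a) * (1 - f)) ∨ (M = a * f ∧ m = (1 - a) * (1 - f))) :
    volume {w : Fin 5 → ℝ | (choiRaf a f w).PosSemidef} =
      ENNReal.ofReal (8 / 45 * π ^ 2 * m ^ ((3 : ℝ) / 2) * (5 * M - m)) := by
  have hmp := (volume_preserving_piFinSuccAbove (fun _ : Fin 5 => ℝ) 1).symm
  rw [← hmp.measure_preimage (measurable_psd a f).nullMeasurableSet, Measure.volume_eq_prod,
    Measure.prod_apply (hmp.measurable (measurable_psd a f)), ← integral_aux m M hm hmM,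
    ← lintegral_indicator measurableSet_Ioo]
  have hfib : ∀ c : ℝ, Prod.mk c ⁻¹' ((MeasurableEquiv.piFinSuccAbove (fun _ : Fin 5 => ℝ) 1).symm ⁻¹'
      {w : Fin 5 → ℝ | (choiRaf a f w).PosSemidef}) =
      {v : Fin 4 → ℝ | (choiRaf a f (Fin.insertNth (α := fun _ => ℝ) 1 c v)).PosSemidef} :=
    fun c => rfl
  refine lintegral_congr_ae ?_
  have hae : ∀ᵐ c : ℝ, c ∉ ({-√m, √m} : Set ℝ) := by
    have : ({-√m, √m} : Set ℝ).Finite := by simp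
    exact measure_eq_zero_iff_ae_notMem.1 (this.measure_zero volume)
  filter_upwards [hae] with c hc
  simp only [Set.mem_insert_iff, Set.mem_singleton_iff, not_or] at hc
  rw [hfib]
  by_cases hcI : c ∈ Set.Ioo (-√m) (√m)
  · rw [Set.indicator_of_mem hcI]
    have hlt : c ^ 2 < m := Real.sq_lt.2 hcI
    rcases h with ⟨rfl, rfl⟩ | ⟨rfl, rfl⟩
    · exact fiber_volume a f c ha hf hlt (hlt.trans_le hmM)
    · rw [fiber_volume a f c ha hf (hlt.trans_le hmM) hlt, mul_comm (a * f - c ^ 2)]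
  · rw [Set.indicator_of_notMem hcI]
    convert measure_empty (μ := (volume : Measure (Fin 4 → ℝ)))
    ext v
    simp only [Set.mem_ofPred_eq, Set.mem_empty_iff_false, iff_false]
    intro hv
    have h2 := fiber_empty_s13 a f c v hv
    have hle : c ^ 2 ≤ m := by
      rcases h with ⟨rfl, rfl⟩ | ⟨rfl, rfl⟩
      · exact h2.1
      · exact h2.2
    have := (Real.sq_le hm).1 hle
    exact hcI ⟨lt_of_le_of_ne this.1 (Ne.symm hc.1), lt_of_le_of_ne this.2 hc.2⟩

/-- The fibre volume of real qubit channels over the classical channel `(a,f)`: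
`V(a,f) = (128/45)π² (af)^{3/2}(5(1-a)(1-f) - af)` if `a+f < 1`, and
`V(a,f) = (128/45)π² ((1-a)(1-f))^{3/2}(5af - (1-a)(1-f))` if `a+f ≥ 1`. -/
theorem stmt_13 (a f : ℝ) (ha : a ∈ Set.Icc (0 : ℝ) 1) (hf : f ∈ Set.Icc (0 : ℝ) 1) :
    2 ^ 4 * volume {w : Fin 5 → ℝ | (choiRaf a f w).PosSemidef} =
      ENNReal.ofReal (if a + f < 1 then
          128 / 45 * π ^ 2 * (a * f) ^ ((3 : ℝ) / 2) * (5 * (1 - a) * (1 - f) - a * f)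
        else
          128 / 45 * π ^ 2 * ((1 - a) * (1 - f)) ^ ((3 : ℝ) / 2) *
            (5 * a * f - (1 - a) * (1 - f))) := by
  have ha0 := ha.1
  have ha1 := sub_nonneg.2 ha.2
  have hf0 := hf.1
  have hf1 := sub_nonneg.2 hf.2
  have h16 : (2 : ENNReal) ^ 4 = ENNReal.ofReal 16 := by norm_num
  rw [h16]
  split_ifs with h
  · rw [volume_min a f (a * f) ((1 - a) * (1 - f)) ha hf (by positivity) (by nlinarith)
      (Or.inl ⟨rfl, rfl⟩), ← ENNReal.ofReal_mul (by norm_num)]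
    congr 1
    ring
  · rw [volume_min a f ((1 - a) * (1 - f)) (a * f) ha hf (by positivity) (by nlinarith)
      (Or.inr ⟨rfl, rfl⟩), ← ENNReal.ofReal_mul (by norm_num)]
    congr 1
    ring
end

section
/- The volume of the set of complex qubit channels 𝒬_ℂ, identified with a convex subset of ℝ¹² via the Choi parametrization with volume element 2⁷ dλ₁₂, equals 2π⁵/4725. -/
open MeasureTheory Real
open scoped ComplexOrder

/-- The Choi matrix of a complex qubit channel with parameters
`(a, f, b, c, d, e, g) ∈ ℝ × ℝ × ℂ⁵` (a 12-real-dimensional parameter space). -/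
noncomputable def choiC (v : ℝ × ℝ × ℂ × ℂ × ℂ × ℂ × ℂ) : Matrix (Fin 4) (Fin 4) ℂ :=
  let (a, f, b, c, d, e, g) := v
  !![(a : ℂ), b, c, d;
     star b, 1 - a, e, -c;
     star c, star e, (f : ℂ), g;
     star d, -star c, star g, 1 - f]


lemma line_int (m : ℝ) (hm : 0 ≤ m) (F f : ℝ → ℝ) (hF : ∀ t, HasDerivAt F (f t) t)
    (hf : Continuous f) (h0 : ∀ t, 0 ≤ t → t ≤ m → 0 ≤ f t) :
    ∫⁻ t in Set.Ioc 0 m, ENNReal.ofReal (f t) = ENNReal.ofReal (F m - F 0) := by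
  rw [← intervalIntegral.integral_eq_sub_of_hasDerivAt (fun t _ => hF t)
    (hf.intervalIntegrable _ _), intervalIntegral.integral_of_le hm,
    ofReal_integral_eq_lintegral_ofReal]
  · exact (hf.intervalIntegrable _ _).1
  · filter_upwards [ae_restrict_mem measurableSet_Ioc] with y hy
    exact h0 y hy.1.le hy.2

lemma radial_int (m : ℝ) (hm : 0 ≤ m) (F f : ℝ → ℝ) (hF : ∀ t, HasDerivAt F (f t) t)
    (hf : Continuous f) (h0 : ∀ t, 0 ≤ t → t ≤ m → 0 ≤ f t) :
    ∫⁻ z : ℂ, (if ‖z‖ ^ 2 ≤ m then ENNReal.ofReal (f (‖z‖ ^ 2)) else 0)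
      = ENNReal.ofReal (π * (F m - F 0)) := by
  have h1 : ∀ z : ℂ, (if ‖z‖ ^ 2 ≤ m then ENNReal.ofReal (f (‖z‖ ^ 2)) else 0)
     = ENNReal.ofReal ((fun r : ℝ => if r ^ 2 ≤ m then f (r ^ 2) else 0) ‖z‖) := by
    intro z; dsimp only; split_ifs <;> simp
  simp_rw [h1]
  have hind : Set.EqOn (fun y : ℝ => y ^ (Module.finrank ℝ ℂ - 1) • (if y ^ 2 ≤ m then f (y ^ 2) else 0))
      ((Set.Ioc 0 (√m)).indicator (fun y => y * f (y ^ 2))) (Set.Ioi 0) := by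
    intro y hy
    have hy' : (0:ℝ) < y := hy
    simp only [Complex.finrank_real_complex, Set.indicator, Set.mem_Ioc, hy', true_and,
      Real.le_sqrt hy'.le hm]
    split_ifs <;> simp
  have hcont : Continuous (fun y : ℝ => y * f (y ^ 2)) := by fun_prop
  have hint : IntegrableOn (fun y : ℝ => y ^ (Module.finrank ℝ ℂ - 1) • (if y ^ 2 ≤ m then f (y ^ 2) else 0)) (Set.Ioi 0) := by
    rw [integrableOn_congr_fun hind measurableSet_Ioi]
    apply Integrable.integrableOn
    rw [integrable_indicator_iff measurableSet_Ioc]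
    exact (hcont.intervalIntegrable _ _).1
  rw [← ofReal_integral_eq_lintegral_ofReal]
  · congr 1
    rw [integral_fun_norm_addHaar (volume : Measure ℂ) (fun r : ℝ => if r ^ 2 ≤ m then f (r ^ 2) else 0),
      setIntegral_congr_fun measurableSet_Ioi hind, setIntegral_indicator measurableSet_Ioc,
      Set.inter_eq_right.2 (fun y hy => hy.1), ← intervalIntegral.integral_of_le (Real.sqrt_nonneg m),
      intervalIntegral.integral_eq_sub_of_hasDerivAt (f := fun y => F (y ^ 2) / 2)]
    · simp [Measure.real, Complex.volume_ball, Real.sq_sqrt hm]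
      ring
    · intro x _
      have := ((hF (x ^ 2)).comp x (hasDerivAt_pow 2 x)).div_const 2
      refine this.congr_deriv ?_
      simp; ring
    · exact hcont.intervalIntegrable _ _
  · exact (integrable_fun_norm_addHaar (volume : Measure ℂ)).2 hint
  · filter_upwards with z
    split_ifs with h
    · exact h0 _ (by positivity) h
    · simp

lemma disk_int (m : ℝ) (hm : 0 ≤ m) (c : ℂ) (C : ℝ) (hC : 0 ≤ C) :
    ∫⁻ z : ℂ, (if ‖z + c‖ ^ 2 ≤ m then ENNReal.ofReal C else 0) = ENNReal.ofReal (π * (m * C)) := by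
  rw [lintegral_add_right_eq_self (fun z : ℂ => if ‖z‖ ^ 2 ≤ m then ENNReal.ofReal C else 0) c]
  rw [radial_int m hm (fun t => t * C) (fun _ => C)]
  · simp
  · intro t; simpa using (hasDerivAt_id t).mul_const C
  · fun_prop
  · intros; exact hC

lemma affine_int (s : ℝ) (hs : 0 < s) (t : ℂ) (F : ℂ → ENNReal) :
    ∫⁻ z, F z = ENNReal.ofReal (s ^ 2) * ∫⁻ k : ℂ, F (s * k + t) := by
  have h1 := lintegral_add_right_eq_self (μ := (volume : Measure ℂ)) F t
  have h2 := Measure.map_addHaar_smul (volume : Measure ℂ) hs.ne'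
  have h3 : ∫⁻ k : ℂ, F (s * k + t) = ∫⁻ k, F (k + t) ∂(Measure.map (fun x : ℂ => s • x) volume) := by
    have := (Homeomorph.smulOfNeZero s hs.ne' : ℂ ≃ₜ ℂ).measurableEmbedding.lintegral_map (μ := volume) (fun k => F (k + t))
    simpa using this.symm
  rw [h3, h2, lintegral_smul_measure, h1, smul_eq_mul, ← mul_assoc, ← ENNReal.ofReal_mul (by positivity)]
  have : s ^ 2 * |(s ^ Module.finrank ℝ ℂ)⁻¹| = 1 := by
    rw [Complex.finrank_real_complex, abs_of_pos (by positivity)]; field_simp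
  rw [this]; simp

lemma ae_ne (m : ℝ) : ∀ᵐ z : ℂ, ‖z‖ ^ 2 ≠ m := by
  have h : volume (Metric.sphere (0:ℂ) (√m)) = 0 := Measure.addHaar_sphere _ _ _
  rw [ae_iff]
  refine measure_mono_null ?_ h
  intro z hz
  simp only [ne_eq, not_not, Set.mem_ofPred_eq] at hz
  simp [← hz]

lemma psd_conj {M U : Matrix (Fin 4) (Fin 4) ℂ} (N : Matrix (Fin 4) (Fin 4) ℂ) (hU : U.det ≠ 0)
    (h : N = U * M * U.conjTranspose) : N.PosSemidef ↔ M.PosSemidef := by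
  rw [h]
  exact Matrix.IsUnit.posSemidef_star_right_conjugate_iff
    ((Matrix.isUnit_iff_isUnit_det _).2 hU.isUnit)

lemma psd_minor {M : Matrix (Fin 4) (Fin 4) ℂ} (hM : M.PosSemidef) (i j : Fin 4) (p q : ℝ)
    (hp : M i i = p) (hq : M j j = q) : 0 ≤ p ∧ 0 ≤ q ∧ ‖M i j‖ ^ 2 ≤ p * q := by
  have h1 := hM.diag_nonneg (i := i)
  have h2 := hM.diag_nonneg (i := j)
  have h3 := (hM.submatrix ![i, j]).det_nonneg
  have h4 : M j i = star (M i j) := (hM.1.apply j i).symm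
  rw [Matrix.det_fin_two] at h3
  simp only [Matrix.submatrix_apply, Matrix.cons_val_zero, Matrix.cons_val_one, h4, hp, hq] at h1 h2 h3
  refine ⟨by exact_mod_cast h1, by exact_mod_cast h2, ?_⟩
  have h5 : M i j * star (M i j) = ((‖M i j‖ ^ 2 : ℝ) : ℂ) := by
    simpa using Complex.mul_conj' (M i j)
  rw [h5, ← Complex.ofReal_mul, ← Complex.ofReal_sub] at h3
  have : 0 ≤ p * q - ‖M i j‖ ^ 2 := by exact_mod_cast h3
  linarith

/-- normalized matrix -/
noncomputable def M0 (x y k w : ℂ) : Matrix (Fin 4) (Fin 4) ℂ :=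
  !![1, x, 0, y;
     star x, 1, k, 0;
     0, star k, 1, w;
     star y, 0, star w, 1]

lemma M0_psd (x y k w : ℂ) (hA : 1 - ‖x‖ ^ 2 ≠ 0) (hk : ‖k‖ ^ 2 ≠ 1 - ‖x‖ ^ 2) :
    (M0 x y k w).PosSemidef ↔ 0 ≤ 1 - ‖x‖ ^ 2 ∧ 0 ≤ 1 - ‖k‖ ^ 2 / (1 - ‖x‖ ^ 2) ∧
      0 ≤ 1 - ‖y‖ ^ 2 / (1 - ‖x‖ ^ 2)
        - ‖w + star k * star x * y / (1 - ‖x‖ ^ 2 : ℝ)‖ ^ 2 / (1 - ‖k‖ ^ 2 / (1 - ‖x‖ ^ 2)) := by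
  set A : ℝ := 1 - ‖x‖ ^ 2 with hAd
  set S : ℝ := 1 - ‖k‖ ^ 2 / A with hSd
  have hS : S ≠ 0 := by
    intro h; apply hk; rw [hSd] at h; field_simp at h; linarith
  set z : ℂ := w + star k * star x * y / A with hz
  have hAC : (A : ℂ) ≠ 0 := by exact_mod_cast hA
  have hSC : (S : ℂ) ≠ 0 := by exact_mod_cast hS
  have e1 : (A : ℂ) = 1 - x * star x := by
    rw [hAd]; push_cast; rw [← Complex.mul_conj' x]; rfl
  have e2 : (S : ℂ) = 1 - k * star k / A := by
    rw [hSd]; push_cast; rw [← Complex.mul_conj' k]; rfl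
  have e3 : ((1 - ‖y‖ ^ 2 / A - ‖z‖ ^ 2 / S : ℝ) : ℂ) = 1 - y * star y / A - z * star z / S := by
    push_cast; rw [← Complex.mul_conj' y, ← Complex.mul_conj' z]; rfl
  have hsA : star (A : ℂ) = A := Complex.conj_ofReal A
  have hsS : star (S : ℂ) = S := Complex.conj_ofReal S
  have hw : w = z - star k * star x * y / A := by rw [hz]; ring
  have hzs : star w = star z - k * x * star y / A := by
    rw [hw]; simp only [star_sub, star_mul', star_star, star_div₀, hsA]
  have key : M0 x y k w = !![1,0,0,0; star x,1,0,0; 0,star k / A,1,0; star y, -x * star y / A, star z / S, 1]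
      * Matrix.diagonal ![(1:ℂ), (A:ℂ), (S:ℂ), ((1 - ‖y‖ ^ 2 / A - ‖z‖ ^ 2 / S : ℝ) : ℂ)]
      * (!![1,0,0,0; star x,1,0,0; 0,star k / A,1,0; star y, -x * star y / A, star z / S, 1] : Matrix (Fin 4) (Fin 4) ℂ).conjTranspose := by
    rw [e3]
    ext i j
    have q1 : x * (starRingEnd ℂ) x = 1 - A := by rw [e1, ← starRingEnd_apply]; ring
    have q2 : k * (starRingEnd ℂ) k = A - A * S := by
      rw [e2, ← starRingEnd_apply]; field_simp; ring
    have q3 : w = z - (starRingEnd ℂ) k * (starRingEnd ℂ) x * y / A := hw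
    have q4 : (starRingEnd ℂ) w = (starRingEnd ℂ) z - k * x * (starRingEnd ℂ) y / A := hzs
    clear_value z A S
    rw [Matrix.mul_apply]
    simp only [Matrix.mul_diagonal, Fin.sum_univ_four]
    fin_cases i <;> fin_cases j <;> simp [M0]
    all_goals clear e1 e2 e3 hsA hsS hzs hw hSd hAd hz hA hS hk
    all_goals try rw [q4]
    all_goals try rw [q3]
    all_goals clear q3 q4
    all_goals generalize (starRingEnd ℂ) x = x' at *
    all_goals generalize (starRingEnd ℂ) k = k' at *
    all_goals generalize (starRingEnd ℂ) y = y' at *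
    all_goals generalize (starRingEnd ℂ) z = z' at *
    all_goals generalize (A : ℂ) = A' at *
    all_goals generalize (S : ℂ) = S' at *
    all_goals field_simp
    all_goals grind
  rw [psd_conj _ _ key, Matrix.posSemidef_diagonal_iff]
  · simp only [Fin.forall_fin_succ]
    simp [-Complex.ofReal_sub, -Complex.ofReal_div]
  · simp [Matrix.det_succ_row_zero, Fin.sum_univ_succ]

lemma choi_conj (a f l1 l3 n1 n3 : ℝ) (c l2 n2 x y k w : ℂ) (h1 : l1 ≠ 0) (h3 : l3 ≠ 0)
    (h1' : n1 ≠ 0) (h3' : n3 ≠ 0) (ha : a = l1 ^ 2) (hc : c = l1 * star l2)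
    (hf : (f : ℂ) = l2 * star l2 + l3 ^ 2) (ha' : 1 - a = n1 ^ 2) (hc' : -c = n1 * star n2)
    (hf' : (1 - f : ℂ) = n2 * star n2 + n3 ^ 2) :
    (choiC (a, f, (l1 * n1 : ℝ) * x + 0, c, (l1 * n3 : ℝ) * y + l1 * x * star n2,
      (l3 * n1 : ℝ) * k + star l2 * star x * n1,
      (l3 * n3 : ℝ) * w + (l2 * x * star n2 + l2 * y * n3 + l3 * star k * star n2))).PosSemidef ↔
    (M0 x y k w).PosSemidef := by
  apply psd_conj (U := !![(l1:ℂ), 0, 0, 0; 0, (n1:ℂ), 0, 0; l2, 0, (l3:ℂ), 0; 0, n2, 0, (n3:ℂ)])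
  · simp [Matrix.det_succ_row_zero, Fin.sum_univ_succ, *]
  · have hc1 : star c = l1 * l2 := by rw [hc]; simp
    have hc1' : -star c = n1 * n2 := by rw [← star_neg, hc']; simp
    have haC : (a : ℂ) = l1 ^ 2 := by rw [ha]; push_cast; rfl
    have haC' : (1 - a : ℂ) = n1 ^ 2 := by
      have : ((1 - a : ℝ) : ℂ) = n1 ^ 2 := by rw [ha']; push_cast; rfl
      simpa using this
    rw [choiC]
    rw [hc1', hc', hc1, hc, haC', haC, hf', hf]
    ext i j
    rw [Matrix.mul_apply]
    simp only [Matrix.mul_apply, Fin.sum_univ_four]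
    fin_cases i <;> fin_cases j <;> simp [M0] <;> ring

lemma ball_vol : ∫⁻ x, ∫⁻ y, ∫⁻ k, ∫⁻ w, {p : Matrix (Fin 4) (Fin 4) ℂ | p.PosSemidef}.indicator
    (fun _ => (1 : ENNReal)) (M0 x y k w) = ENNReal.ofReal (π ^ 4 / 12) := by
  have hw : ∀ x y k : ℂ, 1 - ‖x‖ ^ 2 ≠ 0 → ‖k‖ ^ 2 ≠ 1 - ‖x‖ ^ 2 →
      ∫⁻ w, {p : Matrix (Fin 4) (Fin 4) ℂ | p.PosSemidef}.indicator
      (fun _ => (1 : ENNReal)) (M0 x y k w) =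
      if ‖x‖ ^ 2 ≤ 1 ∧ ‖y‖ ^ 2 ≤ 1 - ‖x‖ ^ 2 ∧ ‖k‖ ^ 2 ≤ 1 - ‖x‖ ^ 2 then
        ENNReal.ofReal (π * ((1 - ‖x‖ ^ 2 - ‖k‖ ^ 2) * (1 - ‖x‖ ^ 2 - ‖y‖ ^ 2)
          / (1 - ‖x‖ ^ 2) ^ 2)) else 0 := by
    intro x y k hA hk
    have hM := fun w => M0_psd x y k w hA hk
    generalize ‖x‖ ^ 2 = X at *
    generalize ‖k‖ ^ 2 = K at *
    have hY : 0 ≤ ‖y‖ ^ 2 := by positivity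
    split_ifs with h
    · obtain ⟨hx, hy, hk'⟩ := h
      have hA0 : 0 < 1 - X := lt_of_le_of_ne (by linarith) hA.symm
      have hS0 : 0 < 1 - X - K := by
        have := lt_of_le_of_ne hk' hk
        linarith
      have hS : 0 < 1 - K / (1 - X) := by
        rw [sub_pos, div_lt_one hA0]; linarith
      rw [← mul_one ((1 - X - K) * (1 - X - ‖y‖ ^ 2) / (1 - X) ^ 2), ← disk_int _ (div_nonneg (mul_nonneg hS0.le (by linarith)) (by positivity)) (star k * star x * y / (1 - X : ℝ)) 1 (by norm_num)]
      apply lintegral_congr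
      intro w
      simp only [Set.indicator, Set.mem_ofPred_eq, hM, hA0.le, hS.le, true_and, ENNReal.ofReal_one]
      congr 1
      rw [sub_nonneg, div_le_iff₀ hS]
      have : (1 - X - K) * (1 - X - ‖y‖ ^ 2) / (1 - X) ^ 2 = (1 - ‖y‖ ^ 2 / (1 - X)) * (1 - K / (1 - X)) := by
        field_simp
      rw [this]
    · rw [← lintegral_zero (μ := (volume : Measure ℂ))]
      apply lintegral_congr
      intro w
      rw [Set.indicator_of_notMem]
      simp only [Set.mem_ofPred_eq, hM]
      rintro ⟨q1, q2, q3⟩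
      apply h
      have hA0 : 0 < 1 - X := lt_of_le_of_ne q1 hA.symm
      refine ⟨by linarith, ?_, ?_⟩
      · have : 0 ≤ ‖w + star k * star x * y / (1 - X : ℝ)‖ ^ 2 / (1 - K / (1 - X)) := by positivity
        have : ‖y‖ ^ 2 / (1 - X) ≤ 1 := by linarith
        rwa [div_le_one hA0] at this
      · have : K / (1 - X) ≤ 1 := by linarith
        rwa [div_le_one hA0] at this
  have hkk : ∀ x y : ℂ, 1 - ‖x‖ ^ 2 ≠ 0 → ∫⁻ k, ∫⁻ w, {p : Matrix (Fin 4) (Fin 4) ℂ | p.PosSemidef}.indicator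
    (fun _ => (1 : ENNReal)) (M0 x y k w) = if ‖x‖ ^ 2 ≤ 1 ∧ ‖y‖ ^ 2 ≤ 1 - ‖x‖ ^ 2 then
        ENNReal.ofReal (π ^ 2 / 2 * (1 - ‖x‖ ^ 2 - ‖y‖ ^ 2)) else 0 := by
    intro x y hA
    rw [lintegral_congr_ae ((ae_ne (1 - ‖x‖ ^ 2)).mono fun k hk => hw x y k hA hk)]
    split_ifs with h
    · simp only [h.1, h.2, true_and]
      have hA0 : 0 < 1 - ‖x‖ ^ 2 := lt_of_le_of_ne (by linarith [h.1]) hA.symm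
      have hy := h.2
      generalize 1 - ‖x‖ ^ 2 = A at *
      generalize ‖y‖ ^ 2 = Y at *
      rw [radial_int A hA0.le (fun t => -(π * ((A - t) ^ 2 / 2 * (A - Y) / A ^ 2)))
        (fun t => π * ((A - t) * (A - Y) / A ^ 2))]
      · congr 1; field_simp; ring
      · intro t
        have := (((((hasDerivAt_id t).const_sub A).pow 2).div_const 2).mul_const (A - Y)).div_const (A ^ 2)
        refine ((this.const_mul π).neg).congr_deriv ?_
        simp; ring
      · fun_prop
      · intro t _ ht
        have : 0 ≤ A - t := by linarith
        have : 0 ≤ A - Y := by linarith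
        positivity
    · rw [← lintegral_zero (μ := (volume : Measure ℂ))]
      apply lintegral_congr
      intro k
      rw [if_neg (by tauto)]; simp
  have hy : ∀ x : ℂ, 1 - ‖x‖ ^ 2 ≠ 0 → ∫⁻ y, ∫⁻ k, ∫⁻ w, {p : Matrix (Fin 4) (Fin 4) ℂ | p.PosSemidef}.indicator
    (fun _ => (1 : ENNReal)) (M0 x y k w) = if ‖x‖ ^ 2 ≤ 1 then
        ENNReal.ofReal (π ^ 3 / 4 * (1 - ‖x‖ ^ 2) ^ 2) else 0 := by
    intro x hA
    rw [lintegral_congr fun y => hkk x y hA]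
    split_ifs with h
    · simp only [h, true_and]
      have hA0 : 0 < 1 - ‖x‖ ^ 2 := lt_of_le_of_ne (by linarith [h]) hA.symm
      generalize 1 - ‖x‖ ^ 2 = A at *
      rw [radial_int A hA0.le (fun t => -(π ^ 2 / 2 * ((A - t) ^ 2 / 2)))
        (fun t => π ^ 2 / 2 * (A - t))]
      · congr 1; ring
      · intro t
        have := ((((hasDerivAt_id t).const_sub A).pow 2).div_const 2)
        refine ((this.const_mul (π ^ 2 / 2)).neg).congr_deriv ?_
        simp; ring
      · fun_prop
      · intro t _ ht
        have : 0 ≤ A - t := by linarith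
        positivity
    · simp [h]
  have hx : ∀ᵐ x : ℂ, 1 - ‖x‖ ^ 2 ≠ 0 := by
    filter_upwards [ae_ne 1] with x hx h
    apply hx; linarith
  rw [lintegral_congr_ae (hx.mono fun x hx => hy x hx)]
  rw [radial_int 1 zero_le_one (fun t => -(π ^ 3 / 4 * ((1 - t) ^ 3 / 3)))
        (fun t => π ^ 3 / 4 * (1 - t) ^ 2)]
  · congr 1; ring
  · intro t
    have := ((((hasDerivAt_id t).const_sub 1).pow 3).div_const 3)
    refine ((this.const_mul (π ^ 3 / 4)).neg).congr_deriv ?_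
    simp; ring
  · fun_prop
  · intro t _ ht
    positivity

lemma affine4 (F : ℂ → ℂ → ℂ → ℂ → ENNReal) (s1 s2 s3 s4 : ℝ) (h1 : 0 < s1) (h2 : 0 < s2)
    (h3 : 0 < s3) (h4 : 0 < s4) (t2 : ℂ → ℂ) (t3 : ℂ → ℂ → ℂ) (t4 : ℂ → ℂ → ℂ → ℂ) :
    ∫⁻ b, ∫⁻ d, ∫⁻ e, ∫⁻ g, F b d e g = ENNReal.ofReal ((s1 * s2 * s3 * s4) ^ 2) *
      ∫⁻ x, ∫⁻ y, ∫⁻ k, ∫⁻ w, F (s1 * x + 0) (s2 * y + t2 x) (s3 * k + t3 x y) (s4 * w + t4 x y k) := by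
  rw [affine_int s1 h1 0]
  simp_rw [fun x => affine_int s2 h2 (t2 x) (fun d => ∫⁻ e, ∫⁻ g, F (s1 * x + 0) d e g),
    fun x y => affine_int s3 h3 (t3 x y) (fun e => ∫⁻ g, F (s1 * x + 0) (s2 * y + t2 x) e g),
    fun x y k => affine_int s4 h4 (t4 x y k) (fun g => F (s1 * x + 0) (s2 * y + t2 x) (s3 * k + t3 x y) g),
    lintegral_const_mul' _ _ ENNReal.ofReal_ne_top]
  simp only [← mul_assoc]
  rw [← ENNReal.ofReal_mul (by positivity), ← ENNReal.ofReal_mul (by positivity),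
    ← ENNReal.ofReal_mul (by positivity)]
  congr 2; ring

lemma inner_vol (a f : ℝ) (c : ℂ) (h0 : 0 < a) (h1 : a < 1) (hP : ‖c‖ ^ 2 < a * f)
    (hR : ‖c‖ ^ 2 < (1 - a) * (1 - f)) :
    ∫⁻ b, ∫⁻ d, ∫⁻ e, ∫⁻ g, {v | (choiC v).PosSemidef}.indicator
    (fun _ => (1 : ENNReal)) (a, f, b, c, d, e, g) =
    ENNReal.ofReal (π ^ 4 / 12 * ((a * f - ‖c‖ ^ 2) ^ 2 * ((1 - a) * (1 - f) - ‖c‖ ^ 2) ^ 2)) := by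
  have h1' : 0 < 1 - a := by linarith
  have p1 : 0 < f - ‖c‖ ^ 2 / a := by
    rw [sub_pos, div_lt_iff₀ h0]; linarith
  have p2 : 0 < (1 - f) - ‖c‖ ^ 2 / (1 - a) := by
    rw [sub_pos, div_lt_iff₀ h1']; linarith
  have hl1 : 0 < √a := Real.sqrt_pos.2 h0
  have hn1 : 0 < √(1 - a) := Real.sqrt_pos.2 h1'
  have hl3 := Real.sqrt_pos.2 p1
  have hn3 := Real.sqrt_pos.2 p2
  have sl1 := Real.sq_sqrt h0.le
  have sn1 := Real.sq_sqrt h1'.le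
  have sl3 := Real.sq_sqrt p1.le
  have sn3 := Real.sq_sqrt p2.le
  have hcc : star c * c = ((‖c‖ ^ 2 : ℝ) : ℂ) := by
    rw [mul_comm]; simpa using Complex.mul_conj' c
  set l1 := √a
  set n1 := √(1 - a)
  set l3 := √(f - ‖c‖ ^ 2 / a)
  set n3 := √((1 - f) - ‖c‖ ^ 2 / (1 - a))
  clear_value l1 n1 l3 n3
  have hl1C : (l1 : ℂ) ≠ 0 := by exact_mod_cast hl1.ne'
  have hn1C : (n1 : ℂ) ≠ 0 := by exact_mod_cast hn1.ne'
  have key := fun x y k w => choi_conj a f l1 l3 n1 n3 c (star c / l1) (-star c / n1) x y k w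
    hl1.ne' hl3.ne' hn1.ne' hn3.ne' sl1.symm (by simp; field_simp)
    (by
      have : (f : ℂ) = ((‖c‖ ^ 2 / l1 ^ 2 + l3 ^ 2 : ℝ) : ℂ) := by
        rw [sl3, sl1]; congr 1; ring
      rw [this]; push_cast
      have hcc' : star c * c = ((‖c‖ : ℂ)) ^ 2 := by rw [hcc]; push_cast; rfl
      rw [← hcc']
      simp
      field_simp)
    sn1.symm (by simp; field_simp)
    (by
      have : ((1 - f : ℝ) : ℂ) = ((‖c‖ ^ 2 / n1 ^ 2 + n3 ^ 2 : ℝ) : ℂ) := by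
        rw [sn3, sn1]; congr 1; ring
      rw [Complex.ofReal_sub, Complex.ofReal_one] at this
      rw [this]; push_cast
      have hcc' : star c * c = ((‖c‖ : ℂ)) ^ 2 := by rw [hcc]; push_cast; rfl
      rw [← hcc']
      simp
      field_simp)
  rw [affine4 _ (l1 * n1) (l1 * n3) (l3 * n1) (l3 * n3) (by positivity) (by positivity) (by positivity)
    (by positivity) (fun x => l1 * x * star (-star c / n1 : ℂ)) (fun x y => star (star c / l1 : ℂ) * star x * n1)
    (fun x y k => ((star c / l1 : ℂ) * x * star (-star c / n1 : ℂ) + (star c / l1 : ℂ) * y * n3 + l3 * star k * star (-star c / n1 : ℂ)))]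
  have hb : ∀ I : ENNReal, I = ∫⁻ x, ∫⁻ y, ∫⁻ k, ∫⁻ w,
      {p : Matrix (Fin 4) (Fin 4) ℂ | p.PosSemidef}.indicator
      (fun _ => (1 : ENNReal)) (M0 x y k w) → I = ENNReal.ofReal (π ^ 4 / 12) := by
    intro I hI; rw [hI, ball_vol]
  rw [hb _ (lintegral_congr fun x => lintegral_congr fun y => lintegral_congr fun k =>
    lintegral_congr fun w => by
      by_cases hM : (M0 x y k w).PosSemidef
      · rw [Set.indicator_of_mem (by exact (key x y k w).2 hM), Set.indicator_of_mem (by exact hM)]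
      · rw [Set.indicator_of_notMem (by exact fun h => hM ((key x y k w).1 h)),
          Set.indicator_of_notMem (by exact hM)])]
  rw [← ENNReal.ofReal_mul (by positivity), mul_comm (π ^ 4 / 12)]
  congr 2
  have e1 : a * f - ‖c‖ ^ 2 = l1 ^ 2 * l3 ^ 2 := by rw [sl1, sl3]; field_simp
  have e2 : (1 - a) * (1 - f) - ‖c‖ ^ 2 = n1 ^ 2 * n3 ^ 2 := by rw [sn1, sn3]; field_simp
  rw [e1, e2]; ring

lemma inner_zero (a f : ℝ) (c : ℂ) (h : ¬ (0 ≤ a ∧ a ≤ 1 ∧ 0 ≤ f ∧ f ≤ 1 ∧ ‖c‖ ^ 2 ≤ a * f ∧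
    ‖c‖ ^ 2 ≤ (1 - a) * (1 - f))) :
    ∫⁻ b, ∫⁻ d, ∫⁻ e, ∫⁻ g, {v | (choiC v).PosSemidef}.indicator
    (fun _ => (1 : ENNReal)) (a, f, b, c, d, e, g) = 0 := by
  have : ∀ b d e g, {v | (choiC v).PosSemidef}.indicator
    (fun _ => (1 : ENNReal)) (a, f, b, c, d, e, g) = 0 := by
    intro b d e g
    rw [Set.indicator_of_notMem]
    intro hM
    apply h
    have q1 := psd_minor hM 0 2 a f (by simp [choiC]) (by simp [choiC])
    have q2 := psd_minor hM 1 3 (1 - a) (1 - f) (by simp [choiC]) (by simp [choiC])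
    simp [choiC] at q1 q2
    exact ⟨q1.1, q2.1, q1.2.1, q2.2.1, q1.2.2, q2.2.2⟩
  simp [this]

lemma choi_closed : IsClosed {v | (choiC v).PosSemidef} := by
  have hc : Continuous choiC := by
    refine continuous_matrix fun i j => ?_
    fin_cases i <;> fin_cases j <;> simp [choiC] <;> fun_prop
  have : {v | (choiC v).PosSemidef} = choiC ⁻¹' {M | M.PosSemidef} := rfl
  rw [this]
  refine IsClosed.preimage hc ?_
  have : {M : Matrix (Fin 4) (Fin 4) ℂ | M.PosSemidef} = {M | M.conjTranspose = M} ∩ ⋂ x : Fin 4 → ℂ,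
      {M | 0 ≤ dotProduct (star x) (M.mulVec x)} := by
    ext M
    simp [Matrix.posSemidef_iff_dotProduct_mulVec, Matrix.IsHermitian]
  rw [this]
  refine IsClosed.inter (isClosed_eq (by fun_prop) continuous_id) (isClosed_iInter fun x => ?_)
  refine isClosed_le continuous_const ?_
  fun_prop

lemma vol_iter (S : Set (ℝ × ℝ × ℂ × ℂ × ℂ × ℂ × ℂ)) (hS : MeasurableSet S) :
    volume S = ∫⁻ a, ∫⁻ f, ∫⁻ c, ∫⁻ b, ∫⁻ d, ∫⁻ e, ∫⁻ g,
      S.indicator (fun _ => (1 : ENNReal)) (a, f, b, c, d, e, g) := by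
  have hm : Measurable (S.indicator (fun _ => (1 : ENNReal))) := measurable_const.indicator hS
  rw [← lintegral_indicator_one hS]
  change ∫⁻ v, S.indicator (fun _ => (1 : ENNReal)) v = _
  generalize S.indicator (fun _ => (1 : ENNReal)) = F at *
  rw [Measure.volume_eq_prod, lintegral_prod _ hm.aemeasurable]
  refine lintegral_congr fun a => ?_
  have ha : Measurable fun v => F (a, v) := hm.comp measurable_prodMk_left
  rw [Measure.volume_eq_prod, lintegral_prod _ ha.aemeasurable]
  refine lintegral_congr fun f => ?_
  have hf : Measurable fun v => F (a, f, v) := ha.comp measurable_prodMk_left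
  rw [Measure.volume_eq_prod, lintegral_prod _ hf.aemeasurable]
  have h1 : ∀ b, ∫⁻ v, F (a, f, b, v) = ∫⁻ c, ∫⁻ r, F (a, f, b, c, r) := by
    intro b
    have hb : Measurable fun v => F (a, f, b, v) := hf.comp measurable_prodMk_left
    rw [Measure.volume_eq_prod, lintegral_prod _ hb.aemeasurable]
  simp_rw [h1]
  rw [lintegral_lintegral_swap]
  · refine lintegral_congr fun c => lintegral_congr fun b => ?_
    have hb : Measurable fun v => F (a, f, b, c, v) :=
      (hf.comp measurable_prodMk_left).comp measurable_prodMk_left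
    rw [Measure.volume_eq_prod, lintegral_prod _ hb.aemeasurable]
    refine lintegral_congr fun d => ?_
    have hd : Measurable fun v => F (a, f, b, c, d, v) := hb.comp measurable_prodMk_left
    rw [Measure.volume_eq_prod, lintegral_prod _ hd.aemeasurable]
  · apply Measurable.aemeasurable
    have : Measurable fun q : (ℂ × ℂ) × (ℂ × ℂ × ℂ) => F (a, f, q.1.1, q.1.2, q.2) := by
      exact hf.comp (by fun_prop)
    exact this.lintegral_prod_right'

/-- value of the radial integral -/
noncomputable def HH (p s : ℝ) : ℝ := s ^ 2 * p ^ 3 / 3 + s * p ^ 4 / 2 + p ^ 5 / 5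

lemma radial_HH (p s : ℝ) (hp : 0 ≤ p) :
    ∫⁻ z : ℂ, (if ‖z‖ ^ 2 ≤ p then
      ENNReal.ofReal (π ^ 4 / 12 * ((p - ‖z‖ ^ 2) ^ 2 * (p + s - ‖z‖ ^ 2) ^ 2)) else 0)
      = ENNReal.ofReal (π ^ 5 / 12 * HH p s) := by
  rw [radial_int p hp (fun t => -(π ^ 4 / 12 * HH (p - t) s))
    (fun t => π ^ 4 / 12 * ((p - t) ^ 2 * (p + s - t) ^ 2))]
  · congr 1; simp only [HH]; ring
  · intro t
    have h := (hasDerivAt_id t).const_sub p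
    have := (((h.pow 3).const_mul (s ^ 2)).div_const 3).add ((((h.pow 4).const_mul s).div_const 2).add
      ((h.pow 5).div_const 5))
    have h2 := ((this.const_mul (π ^ 4 / 12)).neg)
    refine (h2.congr_deriv (g' := π ^ 4 / 12 * ((p - t) ^ 2 * (p + s - t) ^ 2)) ?_).congr_of_eventuallyEq ?_
    · simp; ring
    · filter_upwards with x
      simp [HH]; ring
  · fun_prop
  · intros; positivity

lemma J_vol (a f : ℝ) : ∫⁻ c, ∫⁻ b, ∫⁻ d, ∫⁻ e, ∫⁻ g, {v | (choiC v).PosSemidef}.indicator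
    (fun _ => (1 : ENNReal)) (a, f, b, c, d, e, g) =
    if 0 ≤ a ∧ a ≤ 1 ∧ 0 ≤ f ∧ f ≤ 1 then
      (if f ≤ 1 - a then ENNReal.ofReal (π ^ 5 / 12 * HH (a * f) (1 - a - f))
        else ENNReal.ofReal (π ^ 5 / 12 * HH ((1 - a) * (1 - f)) (a + f - 1))) else 0 := by
  split_ifs with h h2
  · obtain ⟨h0, h1, h3, h4⟩ := h
    rw [← radial_HH _ _ (by positivity)]
    apply lintegral_congr_ae
    filter_upwards [ae_ne (a * f), ae_ne ((1 - a) * (1 - f))] with c hc1 hc2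
    have hn : 0 ≤ ‖c‖ ^ 2 := by positivity
    split_ifs with hc
    · have q1 := lt_of_le_of_ne hc hc1
      have q2 : ‖c‖ ^ 2 < (1 - a) * (1 - f) := by nlinarith
      rw [inner_vol a f c (lt_of_le_of_ne h0 (by rintro rfl; linarith))
        (lt_of_le_of_ne h1 (by rintro rfl; linarith)) q1 q2]
      congr 3; ring
    · apply inner_zero; tauto
  · obtain ⟨h0, h1, h3, h4⟩ := h
    rw [← radial_HH _ _ (mul_nonneg (by linarith) (by linarith))]
    apply lintegral_congr_ae
    filter_upwards [ae_ne (a * f), ae_ne ((1 - a) * (1 - f))] with c hc1 hc2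
    have hn : 0 ≤ ‖c‖ ^ 2 := by positivity
    split_ifs with hc
    · have q2 := lt_of_le_of_ne hc hc2
      have q1 : ‖c‖ ^ 2 < a * f := by nlinarith
      rw [inner_vol a f c (lt_of_le_of_ne h0 (by rintro rfl; linarith))
        (lt_of_le_of_ne h1 (by rintro rfl; linarith)) q1 q2]
      congr 2; ring
    · apply inner_zero; tauto
  · rw [← lintegral_zero (μ := (volume : Measure ℂ))]
    apply lintegral_congr
    intro c
    rw [inner_zero _ _ _ (by tauto)]

lemma HH_nonneg (p s : ℝ) (hp : 0 ≤ p) (hs : 0 ≤ s) : 0 ≤ HH p s := by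
  unfold HH; positivity

/-- antiderivative in f -/
noncomputable def KK (a L f : ℝ) : ℝ :=
  (a ^ 3 * L ^ 2 / 12) * f ^ 4 + (- 2 * a ^ 3 * L / 15 + a ^ 4 * L / 10) * f ^ 5
    + (a ^ 3 / 18 - a ^ 4 / 12 + a ^ 5 / 30) * f ^ 6

lemma KK_deriv (a L f : ℝ) : HasDerivAt (KK a L) (HH (a * f) (L - f)) f := by
  have h := hasDerivAt_id f
  have := (((h.pow 4).const_mul (a ^ 3 * L ^ 2 / 12)).add
    ((h.pow 5).const_mul (- 2 * a ^ 3 * L / 15 + a ^ 4 * L / 10))).add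
    ((h.pow 6).const_mul (a ^ 3 / 18 - a ^ 4 / 12 + a ^ 5 / 30))
  refine (this.congr_deriv (g' := HH (a * f) (L - f)) ?_)
  simp [HH]; ring

lemma line_int' (l m : ℝ) (hm : l ≤ m) (F f : ℝ → ℝ) (hF : ∀ t, HasDerivAt F (f t) t)
    (hf : Continuous f) (h0 : ∀ t, l ≤ t → t ≤ m → 0 ≤ f t) :
    ∫⁻ t in Set.Ioc l m, ENNReal.ofReal (f t) = ENNReal.ofReal (F m - F l) := by
  rw [← intervalIntegral.integral_eq_sub_of_hasDerivAt (fun t _ => hF t)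
    (hf.intervalIntegrable _ _), intervalIntegral.integral_of_le hm,
    ofReal_integral_eq_lintegral_ofReal]
  · exact (hf.intervalIntegrable _ _).1
  · filter_upwards [ae_restrict_mem measurableSet_Ioc] with y hy
    exact h0 y hy.1.le hy.2

noncomputable def GG (a : ℝ) : ℝ := (1 - a) ^ 6 * (a ^ 3 / 180 + a ^ 4 / 60 + a ^ 5 / 30)

lemma f_vol (a : ℝ) (h0 : 0 ≤ a) (h1 : a ≤ 1) :
    ∫⁻ f, ∫⁻ c, ∫⁻ b, ∫⁻ d, ∫⁻ e, ∫⁻ g, {v | (choiC v).PosSemidef}.indicator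
    (fun _ => (1 : ENNReal)) (a, f, b, c, d, e, g) =
    ENNReal.ofReal (π ^ 5 / 12 * (GG a + GG (1 - a))) := by
  simp_rw [J_vol, h0, h1, true_and]
  have hg : ∀ f : ℝ, f ≠ 0 → (if 0 ≤ f ∧ f ≤ 1 then
      (if f ≤ 1 - a then ENNReal.ofReal (π ^ 5 / 12 * HH (a * f) (1 - a - f))
        else ENNReal.ofReal (π ^ 5 / 12 * HH ((1 - a) * (1 - f)) (a + f - 1))) else 0) =
      (Set.Ioc 0 (1 - a)).indicator (fun f => ENNReal.ofReal (π ^ 5 / 12 * HH (a * f) (1 - a - f))) f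
      + (Set.Ioc (1 - a) 1).indicator
        (fun f => ENNReal.ofReal (π ^ 5 / 12 * HH ((1 - a) * (1 - f)) (a + f - 1))) f := by
    intro f hf
    by_cases q0 : 0 ≤ f
    · have q0' : 0 < f := lt_of_le_of_ne q0 hf.symm
      by_cases q1 : f ≤ 1 - a
      · have : f ≤ 1 := by linarith
        simp [Set.indicator, q0, q0', q1, this, not_lt.2 q1]
      · simp [Set.indicator, q0, q1, lt_of_not_ge q1]
    · have : ¬ 0 < f := fun h => q0 h.le
      have q2 : ¬ (1 - a < f) := by intro h; apply q0; linarith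
      simp [Set.indicator, q0, this, q2]
  have hae : ∀ᵐ f : ℝ, f ≠ 0 := by simp [ae_iff]
  have c1 : Continuous fun f => π ^ 5 / 12 * HH (a * f) (1 - a - f) := by unfold HH; fun_prop
  have c2 : Continuous fun f => π ^ 5 / 12 * HH ((1 - a) * (1 - f)) (a + f - 1) := by
    unfold HH; fun_prop
  rw [lintegral_congr_ae (hae.mono hg), lintegral_add_left (by
    exact (ENNReal.measurable_ofReal.comp c1.measurable).indicator measurableSet_Ioc),
    lintegral_indicator measurableSet_Ioc, lintegral_indicator measurableSet_Ioc,
    line_int' 0 (1 - a) (by linarith) (fun f => π ^ 5 / 12 * KK a (1 - a) f) _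
      (fun t => (KK_deriv a (1 - a) t).const_mul _) c1,
    line_int' (1 - a) 1 (by linarith) (fun f => -(π ^ 5 / 12 * KK (1 - a) a (1 - f))) _ _ c2]
  · rw [← ENNReal.ofReal_add]
    · congr 1; simp only [KK, GG]; ring
    · have : π ^ 5 / 12 * KK a (1 - a) (1 - a) - π ^ 5 / 12 * KK a (1 - a) 0 = π ^ 5 / 12 * GG a := by
        simp only [KK, GG]; ring
      rw [this]; unfold GG; have : 0 ≤ 1 - a := by linarith
      positivity
    · have : -(π ^ 5 / 12 * KK (1 - a) a (1 - 1)) - -(π ^ 5 / 12 * KK (1 - a) a (1 - (1 - a))) = π ^ 5 / 12 * GG (1 - a) := by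
        simp only [KK, GG]; ring
      rw [this]; unfold GG; have : 0 ≤ 1 - a := by linarith
      positivity
  · intro t q1 q2
    have := HH_nonneg ((1 - a) * (1 - t)) (a + t - 1) (mul_nonneg (by linarith) (by linarith)) (by linarith)
    positivity
  · intro t
    have h := (KK_deriv (1 - a) a (1 - t)).comp t ((hasDerivAt_id t).const_sub 1)
    refine ((h.const_mul (π ^ 5 / 12)).neg).congr_deriv ?_
    have : a - (1 - t) = a + t - 1 := by ring
    rw [this]; ring
  · intro t q1 q2
    have := HH_nonneg (a * t) (1 - a - t) (by positivity) (by linarith)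
    positivity

/-- antiderivative of `(1-a)^6 a^n` -/
noncomputable def BB (n : ℕ) (a : ℝ) : ℝ :=
  ∑ k ∈ Finset.range 7, (-1) ^ k * (Nat.choose 6 k : ℝ) / (n + k + 1 : ℕ) * a ^ (n + k + 1)

lemma BB_deriv (n : ℕ) (a : ℝ) : HasDerivAt (BB n) ((1 - a) ^ 6 * a ^ n) a := by
  have : HasDerivAt (BB n) (∑ k ∈ Finset.range 7, (-1) ^ k * (Nat.choose 6 k : ℝ) / (n + k + 1 : ℕ)
      * ((n + k + 1 : ℕ) * a ^ (n + k))) a := by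
    have := HasDerivAt.fun_sum (u := Finset.range 7) (x := a)
      (A := fun k a => (-1 : ℝ) ^ k * (Nat.choose 6 k : ℝ) / (n + k + 1 : ℕ) * a ^ (n + k + 1))
      (fun k _ => (hasDerivAt_pow (n + k + 1) a).const_mul _)
    exact this
  refine this.congr_deriv ?_
  have h2 : ∀ k ∈ Finset.range 7, (-1) ^ k * (Nat.choose 6 k : ℝ) / (n + k + 1 : ℕ)
      * ((n + k + 1 : ℕ) * a ^ (n + k)) = (-1) ^ k * (Nat.choose 6 k : ℝ) * a ^ (n + k) := by
    intro k _
    have : ((n + k + 1 : ℕ) : ℝ) ≠ 0 := by positivity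
    field_simp
  rw [Finset.sum_congr rfl h2]
  simp only [Finset.sum_range_succ, Finset.sum_range_zero, show Nat.choose 6 0 = 1 from rfl,
    show Nat.choose 6 1 = 6 from rfl, show Nat.choose 6 2 = 15 from rfl,
    show Nat.choose 6 3 = 20 from rfl, show Nat.choose 6 4 = 15 from rfl,
    show Nat.choose 6 5 = 6 from rfl, show Nat.choose 6 6 = 1 from rfl]
  push_cast
  ring

noncomputable def GA (a : ℝ) : ℝ := BB 3 a / 180 + BB 4 a / 60 + BB 5 a / 30

lemma GA_deriv (a : ℝ) : HasDerivAt GA (GG a) a := by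
  refine ((((BB_deriv 3 a).div_const 180).add ((BB_deriv 4 a).div_const 60)).add
    ((BB_deriv 5 a).div_const 30)).congr_deriv ?_
  unfold GG; ring

lemma GA_val : GA 1 - GA 0 = 1 / 50400 := by
  simp only [GA, BB, Finset.sum_range_succ, Finset.sum_range_zero, show Nat.choose 6 0 = 1 from rfl,
    show Nat.choose 6 1 = 6 from rfl, show Nat.choose 6 2 = 15 from rfl,
    show Nat.choose 6 3 = 20 from rfl, show Nat.choose 6 4 = 15 from rfl,
    show Nat.choose 6 5 = 6 from rfl, show Nat.choose 6 6 = 1 from rfl]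
  norm_num

lemma total_vol : volume {v : ℝ × ℝ × ℂ × ℂ × ℂ × ℂ × ℂ | (choiC v).PosSemidef} =
    ENNReal.ofReal (π ^ 5 / 302400) := by
  rw [vol_iter _ choi_closed.measurableSet]
  have hae : ∀ᵐ f : ℝ, f ≠ 0 := by simp [ae_iff]
  have hg : ∀ a : ℝ, a ≠ 0 → ∫⁻ f, ∫⁻ c, ∫⁻ b, ∫⁻ d, ∫⁻ e, ∫⁻ g, {v | (choiC v).PosSemidef}.indicator
    (fun _ => (1 : ENNReal)) (a, f, b, c, d, e, g) =
    (Set.Ioc 0 1).indicator (fun a => ENNReal.ofReal (π ^ 5 / 12 * (GG a + GG (1 - a)))) a := by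
    intro a ha
    by_cases h : 0 ≤ a ∧ a ≤ 1
    · rw [f_vol a h.1 h.2, Set.indicator_of_mem (Set.mem_Ioc.2 ⟨lt_of_le_of_ne h.1 ha.symm, h.2⟩)]
    · rw [Set.indicator_of_notMem (fun q => h ⟨q.1.le, q.2⟩)]
      simp_rw [J_vol]
      rw [← lintegral_zero (μ := (volume : Measure ℝ))]
      apply lintegral_congr
      intro f
      rw [if_neg (by tauto)]; simp
  rw [lintegral_congr_ae (hae.mono hg), lintegral_indicator measurableSet_Ioc,
    line_int' 0 1 zero_le_one (fun a => π ^ 5 / 12 * (GA a - GA (1 - a)))]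
  · congr 1
    have : π ^ 5 / 12 * (GA 1 - GA (1 - 1)) - π ^ 5 / 12 * (GA 0 - GA (1 - 0))
      = π ^ 5 / 12 * (2 * (GA 1 - GA 0)) := by
      rw [sub_self, sub_zero]; ring
    rw [this, GA_val]; ring
  · intro t
    have h := (GA_deriv (1 - t)).comp t ((hasDerivAt_id t).const_sub 1)
    refine (((GA_deriv t).sub h).const_mul (π ^ 5 / 12)).congr_deriv ?_
    ring
  · unfold GG; fun_prop
  · intro t q1 q2
    have : 0 ≤ 1 - t := by linarith
    unfold GG
    positivity

/-- The volume of the space of complex qubit channels `𝒬_ℂ ⊆ ℝ¹²` (with volume element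
`2⁷ dλ₁₂`) equals `2π⁵/4725`. -/
theorem stmt_15 :
    2 ^ 7 * volume {v : ℝ × ℝ × ℂ × ℂ × ℂ × ℂ × ℂ | (choiC v).PosSemidef} =
      ENNReal.ofReal (2 * π ^ 5 / 4725) := by
  rw [total_vol]
  have : (2 ^ 7 : ENNReal) = ENNReal.ofReal (2 ^ 7) := by
    rw [ENNReal.ofReal_pow (by norm_num)]; simp
  rw [this, ← ENNReal.ofReal_mul (by norm_num)]
  congr 1; ring
end
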